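/- Let (R, m) be a catenary Noetherian local ring of dimension t. There exists a positive integer ℓ, depending only on R, with the following property: whenever x = x_1, ..., x_t is a sequence of elements with (x_1, ..., x_t) ⊆ m^ℓ whose image in R/U_R(0) is a system of parameters of R/U_R(0), and y = y_1, ..., y_t is a sequence of elements with (y) ⊆^A (x) for some t×t matrix A over R, then the image of y is a system of parameters of R/U_R(0) if and only if the determinantal map det(A): R/(x)^lim → R/(y)^lim is injective. -/

import Mathlib

/-!
Write `S = R / U`.  Since `U` has dimension `< t`, every sequence of length `t` satisfies a monomial
relation on `U` (`exists_prd_pow_mem`), so limit closures of sequences of length `t` can be computed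
in `S` (`inLim_quotient_iff`).  Every minimal prime of `U` has dimension `t` by maximality of `U`,
and catenarity then puts every nonmaximal prime of `S` below the last but one term of a chain of
primes of length `t` (`exists_chain_of_catenary`).

The module `S / (x)^lim` embeds into the top local cohomology `H_x = colim S / (x₁ⁿ, …, x_tⁿ)`
(`IsTopLC`), and the determinantal map is the restriction of a natural map `H_x → H_y`
(`IsTopLC.exists_det`).  If `x` and `y` are both systems of parameters, this natural map is
injective (`IsTopLC.det_injective`), which gives one implication.

For the converse let `y` fail to be a system of parameters, and choose a nonmaximal prime `P`
containing `y` and a chain of primes of length `t` whose last but one term contains `P`.  For a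
system of parameters adapted to the chain, the top local cohomology contains a nonzero submodule `D`
that is killed by a power of `P` and divisible by an element of the maximal ideal
(`exists_divisible`).  Its image in `H_y` is zero: submodules of `H_y` killed by `P` have finite
length because `y` is contained in `P` (`IsSmall`), and divisible modules of finite length vanish
by Nakayama's lemma, so that the image is killed by successively smaller powers of `P`.  On the other hand `D` contains a nonzero socle
element.  The socle of the top local cohomology is finitely generated, so for one fixed system of
parameters `u` it is the image of an ideal modulo `(u₁ⁿ, …, u_tⁿ)` with `n` fixed
(`IsTopLC.exists_socle_mem_range`).  If `(x) ⊆ m^ℓ ⊆ (u₁ⁿ, …, u_tⁿ)`, the socle therefore lies in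
the image of `S / (x)^lim`, and the socle element of `D` is a nonzero element of the kernel of the
determinantal map.
-/

open IsLocalRing

/-- The limit closure `(x)^lim = ⋃_{n>0} ((x₁^{n+1}, …, x_r^{n+1}) :_R (x₁⋯x_r)^n)` of a
sequence `x = x₁, …, x_r` of elements of `R`; the union of the increasing family of ideals
is expressed as a supremum. -/
def limitClosure {R : Type*} [CommRing R] {M : Type*} [AddCommGroup M] [Module R M]
    {r : ℕ} (x : Fin r → R) : Submodule R M :=
  ⨆ n : ℕ, (Ideal.span (Set.range fun i => x i ^ (n + 2)) • (⊤ : Submodule R M)).comap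
    (LinearMap.lsmul R M ((∏ i, x i) ^ (n + 1)))

/-- The dimension of a module `M`: the Krull dimension of `R ⧸ Ann M`. -/
noncomputable def moduleDim (R M : Type*) [CommRing R] [AddCommGroup M] [Module R M] :
    WithBot ℕ∞ :=
  ringKrullDim (R ⧸ Module.annihilator R M)

/-- A ring is catenary if, for any primes `p ≤ q`, all saturated chains of primes from `p`
to `q` have the same length. -/
def IsCatenaryRing (R : Type*) [CommRing R] : Prop :=
  ∀ p q : PrimeSpectrum R, p ≤ q →
    ∀ c₁ c₂ : LTSeries (PrimeSpectrum R),
      c₁.head = p → c₁.last = q → c₂.head = p → c₂.last = q →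
      (∀ i : Fin c₁.length, c₁ i.castSucc ⋖ c₁ i.succ) →
      (∀ i : Fin c₂.length, c₂ i.castSucc ⋖ c₂ i.succ) →
      c₁.length = c₂.length

/-- The image of a sequence `x` of elements of a Noetherian local ring `R` is a system of
parameters of `R/U` precisely when the ideal generated by the image is primary to the
maximal ideal of `R/U`, i.e. when `√((x) + U) = m`. -/
def IsSOPMod {R : Type*} [CommRing R] [IsLocalRing R] (U : Ideal R) {t : ℕ}
    (x : Fin t → R) : Prop :=
  (Ideal.span (Set.range x) ⊔ U).radical = maximalIdeal R

universe u

/-! ### Top local cohomology as a direct limit -/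

section TopBasics

variable {R : Type*} [CommRing R]

/-- The ideal `(x₁ⁿ, …, x_tⁿ)`. -/
def pwIdeal {t : ℕ} (x : Fin t → R) (n : ℕ) : Ideal R :=
  Ideal.span (Set.range fun i => x i ^ n)

/-- The product `x₁ ⋯ x_t`. -/
def prd {t : ℕ} (x : Fin t → R) : R := ∏ i, x i

variable {M : Type*} [AddCommGroup M] [Module R M]

/-- The submodule `(x₁ⁿ, …, x_tⁿ) M`. -/
def pwSub {t : ℕ} (x : Fin t → R) (n : ℕ) (M : Type*) [AddCommGroup M] [Module R M] :
    Submodule R M :=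
  pwIdeal x n • (⊤ : Submodule R M)

theorem prd_cons {t : ℕ} (z : R) (w : Fin t → R) :
    prd (Fin.cons z w : Fin (t + 1) → R) = z * prd w := by
  simp [prd, Fin.prod_univ_succ]

theorem pow_smul_mem_pwSub {t : ℕ} (x : Fin t → R) (n : ℕ) (i : Fin t) (m : M) :
    x i ^ n • m ∈ pwSub x n M :=
  Submodule.smul_mem_smul (Ideal.subset_span ⟨i, rfl⟩) trivial

theorem pwSub_le_iff {t : ℕ} (x : Fin t → R) (n : ℕ) (N : Submodule R M) :
    pwSub x n M ≤ N ↔ ∀ i (m : M), x i ^ n • m ∈ N := by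
  constructor
  · intro h i m
    exact h (pow_smul_mem_pwSub x n i m)
  · intro h
    unfold pwSub pwIdeal
    rw [Submodule.smul_le]
    intro r hr m _
    induction hr using Submodule.span_induction with
    | mem r hr => obtain ⟨i, rfl⟩ := hr; exact h i m
    | zero => simp
    | add a b _ _ ha hb => rw [add_smul]; exact N.add_mem ha hb
    | smul a b _ hb => rw [smul_eq_mul, mul_smul]; exact N.smul_mem _ hb

theorem prd_pow_smul_mem {t : ℕ} (x : Fin t → R) (n k : ℕ) (m : M) (hm : m ∈ pwSub x n M) :
    prd x ^ k • m ∈ pwSub x (n + k) M := by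
  have : pwSub x n M ≤ (pwSub x (n + k) M).comap (LinearMap.lsmul R M (prd x ^ k)) := by
    rw [pwSub_le_iff]
    intro i m
    simp only [Submodule.mem_comap, LinearMap.lsmul_apply, prd]
    rw [← Finset.mul_prod_erase Finset.univ x (Finset.mem_univ i), mul_pow, smul_smul]
    have : x i ^ k * (∏ j ∈ Finset.univ.erase i, x j) ^ k * x i ^ n =
      x i ^ (n + k) * (∏ j ∈ Finset.univ.erase i, x j) ^ k := by ring
    rw [this, mul_smul]
    exact pow_smul_mem_pwSub _ _ _ _
  exact this hm

theorem mem_pwSub_cons {t : ℕ} (z : R) (w : Fin t → R) (n : ℕ) (m : M) :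
    m ∈ pwSub (Fin.cons z w : Fin (t + 1) → R) n M ↔
      ∃ m' : M, ∃ s ∈ pwSub w n M, m = z ^ n • m' + s := by
  constructor
  · intro hm
    have : pwSub (Fin.cons z w : Fin (t + 1) → R) n M ≤
        (LinearMap.range (LinearMap.lsmul R M (z ^ n))) ⊔ pwSub w n M := by
      rw [pwSub_le_iff]
      intro i m
      refine Fin.cases ?_ (fun i => ?_) i
      · exact Submodule.mem_sup_left ⟨m, by simp⟩
      · exact Submodule.mem_sup_right (by simpa using pow_smul_mem_pwSub w n i m)
    obtain ⟨a, ⟨m', rfl⟩, s, hs, rfl⟩ := Submodule.mem_sup.1 (this hm)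
    exact ⟨m', s, hs, by simp⟩
  · rintro ⟨m', s, hs, rfl⟩
    refine Submodule.add_mem _ ?_ ?_
    · simpa using pow_smul_mem_pwSub (Fin.cons z w : Fin (t + 1) → R) n 0 m'
    · have : pwSub w n M ≤ pwSub (Fin.cons z w : Fin (t + 1) → R) n M := by
        rw [pwSub_le_iff]
        intro i m
        simpa using pow_smul_mem_pwSub (Fin.cons z w : Fin (t + 1) → R) n i.succ m
      exact this hs

theorem pwSub_map {t : ℕ} (x : Fin t → R) (n : ℕ) {N : Type*} [AddCommGroup N] [Module R N]
    (f : M →ₗ[R] N) {m : M} (hm : m ∈ pwSub x n M) : f m ∈ pwSub x n N := by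
  have : pwSub x n M ≤ (pwSub x n N).comap f := by
    rw [pwSub_le_iff]
    intro i m
    simpa using pow_smul_mem_pwSub x n i (f m)
  exact this hm

theorem pwSub_lift {t : ℕ} (x : Fin t → R) (n : ℕ) {N : Type*} [AddCommGroup N] [Module R N]
    (f : M →ₗ[R] N) (hf : Function.Surjective f) {s : N} (hs : s ∈ pwSub x n N) :
    ∃ m ∈ pwSub x n M, f m = s := by
  have : pwSub x n N ≤ (pwSub x n M).map f := by
    rw [pwSub_le_iff]
    intro i s
    obtain ⟨m, rfl⟩ := hf s
    exact ⟨_, pow_smul_mem_pwSub x n i m, by simp⟩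
  exact this hs

/-- `φ` exhibits `H` as the top local cohomology module of `M` with respect to the sequence `x`,
that is as the direct limit of the modules `M / (x₁ⁿ, …, x_tⁿ) M` along multiplication by
`x₁ ⋯ x_t`; the element `φ n m` is the generalized fraction `[m / (x₁ ⋯ x_t)ⁿ]`. -/
structure IsTopLC {t : ℕ} (x : Fin t → R) {H : Type*} [AddCommGroup H] [Module R H]
    (φ : ℕ → M →ₗ[R] H) : Prop where
  surj : ∀ h, ∃ n m, φ n m = h
  zero_iff : ∀ n m, φ n m = 0 ↔ ∃ k, prd x ^ k • m ∈ pwSub x (n + k) M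
  step : ∀ n m, φ (n + 1) (prd x • m) = φ n m

namespace IsTopLC

variable {t : ℕ} {x : Fin t → R} {H : Type*} [AddCommGroup H] [Module R H]
  {φ : ℕ → M →ₗ[R] H}

theorem steps (h : IsTopLC x φ) (n k : ℕ) (m : M) : φ (n + k) (prd x ^ k • m) = φ n m := by
  induction k with
  | zero => simp
  | succ k ih => rw [pow_succ', mul_smul, ← add_assoc, h.step, ih]

theorem exists_ge (h : IsTopLC x φ) (b : H) (n : ℕ) : ∃ k m, φ (n + k) m = b := by
  obtain ⟨p, m, rfl⟩ := h.surj b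
  exact ⟨p, prd x ^ n • m, by rw [add_comm, h.steps]⟩

theorem zero_of_mem (h : IsTopLC x φ) {n : ℕ} {m : M} (hm : m ∈ pwSub x n M) : φ n m = 0 :=
  (h.zero_iff n m).2 ⟨0, by simpa using hm⟩

theorem exists_lift (h : IsTopLC x φ) {H' : Type*} [AddCommGroup H'] [Module R H']
    (ψ : ℕ → M →ₗ[R] H') (hstep : ∀ n m, ψ (n + 1) (prd x • m) = ψ n m)
    (hzero : ∀ n m, φ n m = 0 → ψ n m = 0) :
    ∃ f : H →ₗ[R] H', ∀ n m, f (φ n m) = ψ n m := by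
  have hsteps : ∀ n k m, ψ (n + k) (prd x ^ k • m) = ψ n m := by
    intro n k m
    induction k with
    | zero => simp
    | succ k ih => rw [pow_succ', mul_smul, ← add_assoc, hstep, ih]
  choose N m hm using h.surj
  have key : ∀ b n m', φ n m' = b → ψ (N b) (m b) = ψ n m' := by
    intro b n m' hb
    rw [← hsteps (N b) n, ← hsteps n (N b), add_comm n, ← sub_eq_zero, ← map_sub]
    apply hzero
    rw [map_sub, h.steps, add_comm, h.steps, hb, hm, sub_self]
  refine ⟨⟨⟨fun b => ψ (N b) (m b), ?_⟩, ?_⟩, ?_⟩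
  · intro a b
    rw [key (a + b) (N a + N b) (prd x ^ N b • m a + prd x ^ N a • m b)]
    · rw [map_add, hsteps, add_comm (N a), hsteps]
    · rw [map_add, h.steps, add_comm (N a), h.steps, hm, hm]
  · intro r b
    simp only [RingHom.id_apply]
    rw [key (r • b) (N b) (r • m b), map_smul]
    rw [map_smul, hm]
  · intro n m'
    exact key _ _ _ rfl

theorem exists_equiv (h : IsTopLC x φ) {H' : Type*} [AddCommGroup H'] [Module R H']
    {ψ : ℕ → M →ₗ[R] H'} (h' : IsTopLC x ψ) :
    ∃ f : H ≃ₗ[R] H', ∀ n m, f (φ n m) = ψ n m := by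
  obtain ⟨f, hf⟩ := h.exists_lift ψ h'.step (fun n m hm => (h'.zero_iff n m).2
    ((h.zero_iff n m).1 hm))
  obtain ⟨g, hg⟩ := h'.exists_lift φ h.step (fun n m hm => (h.zero_iff n m).2
    ((h'.zero_iff n m).1 hm))
  refine ⟨LinearEquiv.ofLinearMap f g ?_ ?_, ?_⟩
  · ext b
    obtain ⟨n, m, rfl⟩ := h'.surj b
    simp [hf, hg]
  · ext b
    obtain ⟨n, m, rfl⟩ := h.surj b
    simp [hf, hg]
  · intro n m
    simp [hf]

end IsTopLC

theorem isTopLC_zero (x : Fin 0 → R) : IsTopLC x (fun _ => (LinearMap.id : M →ₗ[R] M)) where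
  surj h := ⟨0, h, rfl⟩
  zero_iff n m := by simp [prd, pwSub, pwIdeal]
  step n m := by simp [prd]

/-! ### Localization at one element and the cokernel of `M → M_z` -/

/-- The localization `M_z`, as a module over the base ring. -/
abbrev Loc (z : R) (M : Type*) [AddCommGroup M] [Module R M] : Type _ :=
  LocalizedModule (Submonoid.powers z) M

/-- The map `m ↦ m / zᵏ` from `M` to `M_z`. -/
noncomputable def frac (z : R) (k : ℕ) : M →ₗ[R] Loc z M where
  toFun m := LocalizedModule.mk m ⟨z ^ k, k, rfl⟩
  map_add' a b := by
    rw [LocalizedModule.mk_add_mk, LocalizedModule.mk_eq]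
    refine ⟨1, ?_⟩
    simp only [one_smul, Submonoid.smul_def, Submonoid.coe_mul, ← smul_add, smul_smul]
  map_smul' r a := by
    simp only [RingHom.id_apply, LocalizedModule.smul'_mk]

theorem frac_surj (z : R) (ν : Loc z M) : ∃ k m, frac z k m = ν := by
  induction ν using LocalizedModule.induction_on with
  | _ m s =>
    obtain ⟨_, k, rfl⟩ := s
    exact ⟨k, m, rfl⟩

theorem frac_eq_zero (z : R) (k : ℕ) (m : M) : frac z k m = 0 ↔ ∃ i, z ^ i • m = 0 := by
  change LocalizedModule.mk m _ = 0 ↔ _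
  rw [← LocalizedModule.zero_mk (M := M) (S := Submonoid.powers z) 1, LocalizedModule.mk_eq]
  constructor
  · rintro ⟨⟨_, i, rfl⟩, h⟩
    exact ⟨i, by simpa [Submonoid.smul_def] using h⟩
  · rintro ⟨i, h⟩
    exact ⟨⟨z ^ i, i, rfl⟩, by simpa [Submonoid.smul_def] using h⟩

theorem frac_steps (z : R) (k j : ℕ) (m : M) : frac z (k + j) (z ^ j • m) = frac z k m := by
  change LocalizedModule.mk _ _ = LocalizedModule.mk _ _
  rw [LocalizedModule.mk_eq]
  refine ⟨1, ?_⟩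
  simp only [one_smul, Submonoid.smul_def, smul_smul, pow_add]

theorem smul_frac (z : R) (k j : ℕ) (m : M) : z ^ j • frac z (k + j) m = frac z k m := by
  rw [← map_smul, frac_steps]

/-- The cokernel of the localization map `M → M_z`, which is the first local cohomology module
with respect to `z`. -/
abbrev Qz (z : R) (M : Type*) [AddCommGroup M] [Module R M] : Type _ :=
  Loc z M ⧸ LinearMap.range (frac z 0 : M →ₗ[R] Loc z M)

/-- The map `m ↦ [m / zᵏ]` from `M` to the cokernel of `M → M_z`. -/
noncomputable def qfrac (z : R) (k : ℕ) : M →ₗ[R] Qz z M :=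
  (Submodule.mkQ _) ∘ₗ frac z k

theorem qfrac_surj (z : R) (ν : Qz z M) : ∃ k m, qfrac z k m = ν := by
  obtain ⟨ν, rfl⟩ := Submodule.mkQ_surjective _ ν
  obtain ⟨k, m, rfl⟩ := frac_surj z ν
  exact ⟨k, m, rfl⟩

theorem qfrac_steps (z : R) (k j : ℕ) (m : M) : qfrac z (k + j) (z ^ j • m) = qfrac z k m := by
  simp only [qfrac, LinearMap.comp_apply, frac_steps]

theorem qfrac_eq_zero (z : R) (k : ℕ) (m : M) :
    qfrac z k m = 0 ↔ ∃ i, ∃ m' : M, z ^ i • m = z ^ (i + k) • m' := by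
  simp only [qfrac, LinearMap.comp_apply, Submodule.mkQ_apply, Submodule.Quotient.mk_eq_zero,
    LinearMap.mem_range]
  constructor
  · rintro ⟨m', h⟩
    rw [← frac_steps z 0 k, zero_add, ← sub_eq_zero, ← map_sub, frac_eq_zero] at h
    obtain ⟨i, hi⟩ := h
    refine ⟨i, m', ?_⟩
    rw [smul_sub, sub_eq_zero, smul_smul, ← pow_add] at hi
    exact hi.symm
  · rintro ⟨i, m', h⟩
    refine ⟨m', ?_⟩
    rw [← frac_steps z 0 k, zero_add, ← sub_eq_zero, ← map_sub, frac_eq_zero]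
    exact ⟨i, by rw [smul_sub, h, smul_smul, ← pow_add, sub_self]⟩

/-- Top local cohomology with respect to `z, w` is the first local cohomology with respect to `z`
of the top local cohomology with respect to `w`. -/
theorem IsTopLC.cons {t : ℕ} {w : Fin t → R} {H : Type*} [AddCommGroup H] [Module R H]
    {φ : ℕ → M →ₗ[R] H} (h : IsTopLC w φ) (z : R) :
    IsTopLC (Fin.cons z w : Fin (t + 1) → R) (fun n => qfrac z n ∘ₗ φ n) where
  surj b := by
    obtain ⟨k, b, rfl⟩ := qfrac_surj z b
    obtain ⟨n, m, rfl⟩ := h.surj b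
    refine ⟨k + n, z ^ n • prd w ^ k • m, ?_⟩
    rw [LinearMap.comp_apply, map_smul, add_comm k n, h.steps, add_comm n k, qfrac_steps]
  step n m := by
    rw [LinearMap.comp_apply, prd_cons, mul_smul, map_smul, h.step]
    simpa using qfrac_steps z n 1 (φ n m)
  zero_iff n m := by
    rw [LinearMap.comp_apply, qfrac_eq_zero]
    constructor
    · rintro ⟨i, b, hb⟩
      obtain ⟨k, m', rfl⟩ := h.exists_ge b n
      rw [← h.steps n k, ← map_smul, ← map_smul, ← sub_eq_zero, ← map_sub, h.zero_iff] at hb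
      obtain ⟨j, hj⟩ := hb
      refine ⟨i + (k + j), ?_⟩
      rw [mem_pwSub_cons]
      refine ⟨prd w ^ (j + i) • m', z ^ (k + j) • prd w ^ i •
        prd w ^ j • (z ^ i • prd w ^ k • m - z ^ (i + n) • m'), ?_, ?_⟩
      · apply Submodule.smul_mem
        have := prd_pow_smul_mem w (n + k + j) i _ hj
        convert this using 2
        ring
      · rw [prd_cons]
        module
    · rintro ⟨k, hk⟩
      rw [mem_pwSub_cons] at hk
      obtain ⟨m', s, hs, e⟩ := hk
      refine ⟨k, φ (n + k) m', ?_⟩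
      have := congrArg (φ (n + k)) e
      rw [prd_cons, mul_pow, mul_smul, map_smul, h.steps, map_add, h.zero_of_mem hs, add_zero,
        map_smul] at this
      rw [this, add_comm]

theorem exists_isTopLC {R : Type u} [CommRing R] {t : ℕ} (x : Fin t → R) (M : Type u)
    [AddCommGroup M] [Module R M] :
    ∃ (H : Type u) (_ : AddCommGroup H) (_ : Module R H) (φ : ℕ → M →ₗ[R] H), IsTopLC x φ := by
  induction t with
  | zero => exact ⟨M, _, _, _, isTopLC_zero x⟩
  | succ t ih =>
    obtain ⟨H, _, _, φ, hφ⟩ := ih (Fin.tail x)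
    refine ⟨Qz (x 0) H, inferInstance, inferInstance, fun n => qfrac (x 0) n ∘ₗ φ n, ?_⟩
    have := hφ.cons (x 0)
    rwa [Fin.cons_self_tail] at this

/-- The submodule `rM`. -/
abbrev rSub (r : R) (M : Type*) [AddCommGroup M] [Module R M] : Submodule R M :=
  LinearMap.range (LinearMap.lsmul R M r)

theorem rSub_le_comap (r : R) {N : Type*} [AddCommGroup N] [Module R N] (f : M →ₗ[R] N) :
    rSub r M ≤ (rSub r N).comap f := by
  rintro _ ⟨m, rfl⟩
  exact ⟨f m, by simp⟩

/-- Top local cohomology is right exact, so it commutes with the quotient by `r`. -/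
theorem IsTopLC.quot {t : ℕ} {w : Fin t → R} {H : Type*} [AddCommGroup H] [Module R H]
    {φ : ℕ → M →ₗ[R] H} (h : IsTopLC w φ) (r : R) :
    IsTopLC w (fun n => Submodule.mapQ (rSub r M) (rSub r H) (φ n) (rSub_le_comap r (φ n))) where
  surj b := by
    obtain ⟨b, rfl⟩ := Submodule.mkQ_surjective _ b
    obtain ⟨n, m, rfl⟩ := h.surj b
    exact ⟨n, Submodule.Quotient.mk m, by simp⟩
  step n m := by
    obtain ⟨m, rfl⟩ := Submodule.mkQ_surjective _ m
    rw [← map_smul, Submodule.mkQ_apply, Submodule.mkQ_apply, Submodule.mapQ_apply,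
      Submodule.mapQ_apply, h.step]
  zero_iff n m := by
    obtain ⟨m, rfl⟩ := Submodule.mkQ_surjective _ m
    simp only [Submodule.mkQ_apply, Submodule.mapQ_apply, Submodule.Quotient.mk_eq_zero]
    constructor
    · rintro ⟨b, hb⟩
      obtain ⟨k, m', rfl⟩ := h.exists_ge b n
      rw [LinearMap.lsmul_apply, ← h.steps n k, ← map_smul, ← sub_eq_zero, ← map_sub,
        h.zero_iff] at hb
      obtain ⟨j, hj⟩ := hb
      refine ⟨k + j, ?_⟩
      have := pwSub_map w _ (rSub r M).mkQ hj
      rw [smul_sub, map_sub, smul_comm _ r, Submodule.mkQ_apply, Submodule.mkQ_apply,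
        (Submodule.Quotient.mk_eq_zero (rSub r M) (x := r • prd w ^ j • m')).2
          ⟨prd w ^ j • m', rfl⟩, zero_sub, neg_mem_iff, smul_smul, ← pow_add, add_comm j k] at this
      rw [← Submodule.Quotient.mk_smul, ← add_assoc]
      exact this
    · rintro ⟨k, hk⟩
      obtain ⟨s, hs, e⟩ := pwSub_lift w _ (rSub r M).mkQ (Submodule.mkQ_surjective _) hk
      rw [← Submodule.Quotient.mk_smul, Submodule.mkQ_apply, Submodule.Quotient.eq] at e
      obtain ⟨m', hm'⟩ := e
      refine ⟨- φ (n + k) m', ?_⟩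
      have := congrArg (φ (n + k)) hm'
      rw [map_sub, h.steps, h.zero_of_mem hs] at this
      simpa using congrArg Neg.neg this

/-- The `z`-power torsion of a module. -/
def tors (z : R) (M : Type*) [AddCommGroup M] [Module R M] : Submodule R M where
  carrier := {m | ∃ i : ℕ, z ^ i • m = 0}
  zero_mem' := ⟨0, by simp⟩
  add_mem' := by
    rintro a b ⟨i, hi⟩ ⟨j, hj⟩
    refine ⟨i + j, ?_⟩
    rw [smul_add, pow_add, mul_smul, mul_smul, hj, smul_comm, hi]; simp
  smul_mem' := by
    rintro r a ⟨i, hi⟩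
    exact ⟨i, by rw [smul_comm, hi, smul_zero]⟩

theorem mem_tors {z : R} {m : M} : m ∈ tors z M ↔ ∃ i : ℕ, z ^ i • m = 0 := Iff.rfl

/-- The `z`-power torsion does not contribute to top local cohomology with respect to a sequence
starting with `z`. -/
theorem IsTopLC.of_quot_tors {t : ℕ} {z : R} {w : Fin t → R} {H : Type*} [AddCommGroup H]
    [Module R H] {φ : ℕ → (M ⧸ tors z M) →ₗ[R] H}
    (h : IsTopLC (Fin.cons z w : Fin (t + 1) → R) φ) :
    IsTopLC (Fin.cons z w : Fin (t + 1) → R) (fun n => φ n ∘ₗ (tors z M).mkQ) where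
  surj b := by
    obtain ⟨n, m, rfl⟩ := h.surj b
    obtain ⟨m, rfl⟩ := Submodule.mkQ_surjective _ m
    exact ⟨n, m, rfl⟩
  step n m := by
    rw [LinearMap.comp_apply, map_smul, h.step]; rfl
  zero_iff n m := by
    rw [LinearMap.comp_apply, h.zero_iff]
    constructor
    · rintro ⟨k, hk⟩
      obtain ⟨s, hs, e⟩ := pwSub_lift _ _ (tors z M).mkQ (Submodule.mkQ_surjective _) hk
      rw [← map_smul, Submodule.mkQ_apply, Submodule.mkQ_apply, Submodule.Quotient.eq] at e
      obtain ⟨i, hi⟩ := e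
      refine ⟨k + i, ?_⟩
      have : prd (Fin.cons z w : Fin (t + 1) → R) ^ i •
          (s - prd (Fin.cons z w : Fin (t + 1) → R) ^ k • m) = 0 := by
        rw [prd_cons, mul_pow, mul_comm, mul_smul, ← prd_cons, hi, smul_zero]
      rw [smul_sub, sub_eq_zero, smul_smul, ← pow_add, add_comm i k] at this
      rw [← this, ← add_assoc]
      exact prd_pow_smul_mem _ _ _ _ hs
    · rintro ⟨k, hk⟩
      refine ⟨k, ?_⟩
      rw [← map_smul]
      exact pwSub_map _ _ _ hk

end TopBasics

/-! ### Determinantal maps between top local cohomology modules -/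

section Comparison

variable {R : Type*} [CommRing R]

/-- If `A` and `A'` differ only in row `k` and both carry `x` to `y`, then the difference of the
determinants is the determinant of a matrix killing the `k`-th coordinate, so by Cramer's rule it
multiplies `y_k` into the ideal generated by the other `y_i`. -/
theorem det_sub_det_updateRow {t : ℕ} (x y : Fin t → R) (A : Matrix (Fin t) (Fin t) R)
    (k : Fin t) (b : Fin t → R) (hA : ∀ i, y i = ∑ j, A i j * x j)
    (hb : y k = ∑ j, b j * x j) :
    prd y * (A.det - (A.updateRow k b).det) ∈ pwIdeal y 2 := by
  classical
  set C := A.updateRow k (A k - b) with hC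
  have hdet : A.det - (A.updateRow k b).det = C.det := by
    have h1 := Matrix.det_updateRow_add A k (A k - b) b
    rw [sub_add_cancel, Matrix.updateRow_eq_self] at h1
    rw [h1, add_sub_cancel_right]
  have hCx : ∀ i, ∑ j, C i j * x j = if i = k then 0 else y i := by
    intro i
    by_cases hi : i = k
    · subst hi
      simp [hC, sub_mul, Finset.sum_sub_distrib, ← hA, ← hb]
    · simp [hC, hi, hA]
  have hadj : ∀ j, C.det * x j = ∑ i, C.adjugate j i * (if i = k then 0 else y i) := by
    intro j
    have h1 : (C.adjugate * C).mulVec x j = C.det * x j := by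
      rw [Matrix.adjugate_mul]
      simp [Matrix.smul_mulVec]
    rw [← h1, ← Matrix.mulVec_mulVec]
    simp only [Matrix.mulVec, dotProduct, hCx]
  rw [hdet]
  have hJ : C.det * y k ∈ Ideal.span (y '' {i | i ≠ k}) := by
    rw [hA k, Finset.mul_sum]
    refine Ideal.sum_mem _ fun j _ => ?_
    rw [mul_left_comm]
    refine Ideal.mul_mem_left _ _ ?_
    rw [hadj]
    refine Ideal.sum_mem _ fun i _ => ?_
    by_cases hi : i = k
    · simp [hi]
    · simp only [hi, if_false]
      exact Ideal.mul_mem_left _ _ (Ideal.subset_span ⟨i, hi, rfl⟩)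
  have hle : Ideal.span (y '' {i | i ≠ k}) ≤
      Submodule.comap (LinearMap.mulLeft R (∏ i ∈ Finset.univ.erase k, y i)) (pwIdeal y 2) := by
    refine Ideal.span_le.2 ?_
    rintro _ ⟨i, hi, rfl⟩
    change (∏ i ∈ Finset.univ.erase k, y i) * y i ∈ pwIdeal y 2
    rw [← Finset.mul_prod_erase (Finset.univ.erase k) y (a := i) (by simpa using hi)]
    have : y i * (∏ x ∈ (Finset.univ.erase k).erase i, y x) * y i =
      (∏ x ∈ (Finset.univ.erase k).erase i, y x) * y i ^ 2 := by ring
    rw [this]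
    exact Ideal.mul_mem_left _ _ (Ideal.subset_span ⟨i, rfl⟩)
  have h2 : (∏ i ∈ Finset.univ.erase k, y i) * (C.det * y k) ∈ pwIdeal y 2 := hle hJ
  rw [prd, ← Finset.mul_prod_erase Finset.univ y (Finset.mem_univ k)]
  convert h2 using 1
  ring

/-- Independence of the determinantal map of the chosen matrix: rows of `A` are exchanged for rows
of `A'` one at a time. -/
theorem prd_mul_det_sub_mem {t : ℕ} (x y : Fin t → R) (A A' : Matrix (Fin t) (Fin t) R)
    (hA : ∀ i, y i = ∑ j, A i j * x j) (hA' : ∀ i, y i = ∑ j, A' i j * x j) :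
    prd y * (A.det - A'.det) ∈ pwIdeal y 2 := by
  classical
  have key : ∀ s : Finset (Fin t), prd y *
      (A.det - (Matrix.of fun i => if i ∈ s then A' i else A i).det) ∈ pwIdeal y 2 := by
    intro s
    induction s using Finset.induction_on with
    | empty =>
      have : (Matrix.of fun i => if i ∈ (∅ : Finset (Fin t)) then A' i else A i) = A := by
        ext i j; simp
      rw [this]; simp
    | insert k s hk ih =>
      set B : Matrix (Fin t) (Fin t) R := Matrix.of fun i => if i ∈ s then A' i else A i
        with hB
      have hBx : ∀ i, y i = ∑ j, B i j * x j := by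
        intro i
        by_cases hi : i ∈ s
        · simp [hB, hi, hA']
        · simp [hB, hi, hA]
      have h1 := det_sub_det_updateRow x y B k (A' k) hBx (hA' k)
      have h2 : (Matrix.of fun i => if i ∈ insert k s then A' i else A i) =
          B.updateRow k (A' k) := by
        ext i j
        by_cases hi : i = k
        · subst hi; simp
        · simp [hB, hi]
      rw [h2]
      have := Ideal.add_mem _ ih h1
      convert this using 1
      ring
  have h1 := key Finset.univ
  have h2 : (Matrix.of fun i => if i ∈ (Finset.univ : Finset (Fin t)) then A' i else A i) = A' := by
    ext i j; simp
  rwa [h2] at h1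

theorem mem_pwSub_self {t : ℕ} (x : Fin t → R) (n : ℕ) (r : R) :
    r ∈ pwSub x n R ↔ r ∈ pwIdeal x n := by
  simp [pwSub]

theorem pwIdeal_pow {t : ℕ} (x : Fin t → R) (n k : ℕ) :
    pwIdeal (fun i => x i ^ n) k = pwIdeal x (n * k) := by
  simp [pwIdeal, pow_mul]

theorem prd_pow {t : ℕ} (x : Fin t → R) (n : ℕ) : prd (fun i => x i ^ n) = prd x ^ n := by
  simp [prd, Finset.prod_pow]

/-- Well-definedness of determinantal maps on top local cohomology. -/
theorem IsTopLC.det_indep {t : ℕ} {x y : Fin t → R} {H' : Type*} [AddCommGroup H'] [Module R H']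
    {ψ : ℕ → R →ₗ[R] H'} (hψ : IsTopLC y ψ) {n N N' : ℕ} {A A' : Matrix (Fin t) (Fin t) R}
    (hA : ∀ i, y i ^ N = ∑ j, A i j * x j ^ n) (hA' : ∀ i, y i ^ N' = ∑ j, A' i j * x j ^ n)
    (c : R) : ψ N (A.det * c) = ψ N' (A'.det * c) := by
  have h := prd_mul_det_sub_mem (fun j => x j ^ n) (fun i => y i ^ (N + N'))
    (Matrix.diagonal (fun i => y i ^ N') * A) (Matrix.diagonal (fun i => y i ^ N) * A')
    (fun i => by
      simp [Matrix.diagonal_mul, mul_assoc, ← Finset.mul_sum, ← hA, pow_add, mul_comm (y i ^ N)])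
    (fun i => by simp [Matrix.diagonal_mul, mul_assoc, ← Finset.mul_sum, ← hA', pow_add])
  rw [prd_pow, pwIdeal_pow, Matrix.det_mul, Matrix.det_mul, Matrix.det_diagonal,
    Matrix.det_diagonal, Finset.prod_pow, Finset.prod_pow] at h
  change prd y ^ (N + N') * (prd y ^ N' * A.det - prd y ^ N * A'.det) ∈ _ at h
  rw [← hψ.steps N N', ← hψ.steps N' N, add_comm N' N, ← sub_eq_zero, ← map_sub, hψ.zero_iff]
  refine ⟨N + N', ?_⟩
  rw [mem_pwSub_self]
  have h2 := Ideal.mul_mem_right c _ h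
  simp only [smul_eq_mul]
  rw [mul_two] at h2
  convert h2 using 1
  ring

/-- If every `y i` lies in the radical of `(x)`, then high powers of the `y i` lie in any
`(x₁ⁿ, …, x_tⁿ)`. -/
theorem exists_pow_eq_sum {t : ℕ} {x y : Fin t → R}
    (hxy : ∀ i, y i ∈ (Ideal.span (Set.range x)).radical) (n : ℕ) :
    ∃ N, ∃ A : Matrix (Fin t) (Fin t) R, ∀ i, y i ^ N = ∑ j, A i j * x j ^ n := by
  have h1 : ∀ i, ∃ N, y i ^ N ∈ pwIdeal x n := by
    intro i
    have : (Ideal.span (Set.range x)).radical ≤ (pwIdeal x n).radical := by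
      rw [Ideal.radical_le_radical_iff, Ideal.span_le]
      rintro _ ⟨j, rfl⟩
      exact ⟨n, Ideal.subset_span ⟨j, rfl⟩⟩
    exact this (hxy i)
  choose N hN using h1
  refine ⟨∑ i, N i, ?_⟩
  have h2 : ∀ i, ∃ a : Fin t → R, ∑ j, a j * x j ^ n = y i ^ (∑ i, N i) := by
    intro i
    rw [← Ideal.mem_span_range_iff_exists_fun]
    exact Ideal.pow_mem_of_pow_mem _ (hN i)
      (Finset.single_le_sum (f := N) (fun _ _ => Nat.zero_le _) (Finset.mem_univ i))
  choose A hA using h2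
  exact ⟨A, fun i => (hA i).symm⟩

theorem det_mul_mem {t : ℕ} {x y : Fin t → R} {A : Matrix (Fin t) (Fin t) R}
    (hA : ∀ i, y i = ∑ j, A i j * x j) {r : R} (hr : r ∈ Ideal.span (Set.range x)) :
    A.det * r ∈ Ideal.span (Set.range y) := by
  have : Ideal.span (Set.range x) ≤
      Submodule.comap (LinearMap.mulLeft R A.det) (Ideal.span (Set.range y)) := by
    refine Ideal.span_le.2 ?_
    rintro _ ⟨j, rfl⟩
    change A.det * x j ∈ Ideal.span (Set.range y)
    have h1 : (A.adjugate * A).mulVec x j = A.det * x j := by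
      rw [Matrix.adjugate_mul]
      simp [Matrix.smul_mulVec]
    rw [← h1, ← Matrix.mulVec_mulVec]
    have h2 : A.mulVec x = y := by
      ext i; simp [Matrix.mulVec, dotProduct, hA]
    rw [h2]
    change ∑ i, A.adjugate j i * y i ∈ Ideal.span (Set.range y)
    refine Ideal.sum_mem _ fun i _ => ?_
    exact Ideal.mul_mem_left _ _ (Ideal.subset_span ⟨i, rfl⟩)
  exact this hr

/-- The natural map between the top local cohomology modules of `x` and `y`, where `y` lies in the
radical of `(x)`: on representatives it is given by determinantal maps. -/
theorem IsTopLC.exists_det {t : ℕ} {x y : Fin t → R} {H H' : Type*} [AddCommGroup H] [Module R H]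
    [AddCommGroup H'] [Module R H'] {φ : ℕ → R →ₗ[R] H} {ψ : ℕ → R →ₗ[R] H'}
    (hφ : IsTopLC x φ) (hψ : IsTopLC y ψ)
    (hxy : ∀ i, y i ∈ (Ideal.span (Set.range x)).radical) :
    ∃ θ : H →ₗ[R] H', ∀ n N (A : Matrix (Fin t) (Fin t) R),
      (∀ i, y i ^ N = ∑ j, A i j * x j ^ n) → ∀ c, θ (φ n c) = ψ N (A.det * c) := by
  choose N A hA using exists_pow_eq_sum hxy
  have hstep : ∀ n m, (ψ (N (n + 1)) ∘ₗ LinearMap.lsmul R R (A (n + 1)).det) (prd x • m) =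
      (ψ (N n) ∘ₗ LinearMap.lsmul R R (A n).det) m := by
    intro n m
    have := hψ.det_indep (hA n) (N' := N (n + 1))
      (A' := A (n + 1) * Matrix.diagonal x) (fun i => by
        rw [hA (n + 1)]
        refine Finset.sum_congr rfl fun j _ => ?_
        simp [Matrix.mul_diagonal, pow_succ', mul_assoc]) m
    simp only [LinearMap.comp_apply, LinearMap.lsmul_apply, smul_eq_mul]
    rw [this, Matrix.det_mul, Matrix.det_diagonal, mul_assoc]
    rfl
  have hsteps : ∀ k n m, (ψ (N (n + k)) ∘ₗ LinearMap.lsmul R R (A (n + k)).det) (prd x ^ k • m) =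
      (ψ (N n) ∘ₗ LinearMap.lsmul R R (A n).det) m := by
    intro k n m
    induction k with
    | zero => simp
    | succ k ih => rw [pow_succ', mul_smul, ← add_assoc, hstep, ih]
  obtain ⟨θ, hθ⟩ := hφ.exists_lift (fun n => ψ (N n) ∘ₗ LinearMap.lsmul R R (A n).det) hstep (by
    intro n m hm
    obtain ⟨k, hk⟩ := (hφ.zero_iff n m).1 hm
    rw [← hsteps k]
    simp only [LinearMap.comp_apply, LinearMap.lsmul_apply, smul_eq_mul]
    apply hψ.zero_of_mem
    rw [mem_pwSub_self] at hk ⊢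
    exact det_mul_mem (hA (n + k)) hk)
  refine ⟨θ, fun n N' A' hA' c => ?_⟩
  rw [hθ]
  simp only [LinearMap.comp_apply, LinearMap.lsmul_apply, smul_eq_mul]
  have hdet := hψ.det_indep (hA n) hA' c
  exact hdet

/-- If `(x)` and `(y)` have the same radical, the natural map has an inverse, namely the natural
map in the other direction. -/
theorem IsTopLC.det_injective {t : ℕ} {x y : Fin t → R} {H H' : Type*} [AddCommGroup H]
    [Module R H] [AddCommGroup H'] [Module R H'] {φ : ℕ → R →ₗ[R] H} {ψ : ℕ → R →ₗ[R] H'}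
    (hφ : IsTopLC x φ) (hψ : IsTopLC y ψ)
    (hxy : ∀ i, y i ∈ (Ideal.span (Set.range x)).radical)
    (hyx : ∀ i, x i ∈ (Ideal.span (Set.range y)).radical)
    {θ : H →ₗ[R] H'} (hθ : ∀ n N (A : Matrix (Fin t) (Fin t) R),
      (∀ i, y i ^ N = ∑ j, A i j * x j ^ n) → ∀ c, θ (φ n c) = ψ N (A.det * c)) :
    Function.Injective θ := by
  obtain ⟨θ', hθ'⟩ := hψ.exists_det hφ hyx
  have : ∀ h, θ' (θ h) = h := by
    intro h
    obtain ⟨n, c, rfl⟩ := hφ.surj h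
    obtain ⟨N, A, hA⟩ := exists_pow_eq_sum hxy n
    obtain ⟨n', B, hB⟩ := exists_pow_eq_sum hyx N
    rw [hθ n N A hA, hθ' N n' B hB, ← mul_assoc, ← Matrix.det_mul]
    have := hφ.det_indep (x := x) (n := n) (N := n) (N' := n') (A := 1) (A' := B * A)
      (fun i => by simp [Matrix.one_apply]) (fun i => by
        rw [hB]
        simp only [hA, Matrix.mul_apply, Finset.sum_mul, Finset.mul_sum, mul_assoc]
        rw [Finset.sum_comm]) c
    rw [← this]
    simp
  exact Function.LeftInverse.injective this

end Comparison

/-! ### Vanishing above the dimension and passage to the quotient by the unmixed component -/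

section Vanishing

variable {R : Type*} [CommRing R]

/-- The boundary monoid of an element `z`: all `zᵏ (1 + a z)`.  Inverting it removes every
maximal ideal, hence lowers the dimension. -/
def boundaryMonoid (z : R) : Submonoid R where
  carrier := {s | ∃ k a, s = z ^ k * (1 + a * z)}
  one_mem' := ⟨0, 0, by simp⟩
  mul_mem' := by
    rintro _ _ ⟨k, a, rfl⟩ ⟨l, b, rfl⟩
    exact ⟨k + l, a + b + a * b * z, by ring⟩

/-- A sequence of `t` elements in a ring of dimension `< t` satisfies a monomial relation.  The
induction localizes at the boundary monoid of one element, which lowers the dimension. -/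
theorem exists_prd_pow_mem {A : Type u} [CommRing A] {t : ℕ}
    (hA : ∀ p : LTSeries (PrimeSpectrum A), p.length < t) (y : Fin t → A) :
    ∃ n, prd y ^ n ∈ pwIdeal y (n + 1) := by
  induction t generalizing A with
  | zero =>
    have : IsEmpty (PrimeSpectrum A) :=
      ⟨fun p => absurd (hA (RelSeries.singleton _ p)) (Nat.not_lt_zero _)⟩
    have : Subsingleton A := PrimeSpectrum.isEmpty_iff_subsingleton.1 this
    exact ⟨0, by rw [Subsingleton.elim (prd y ^ 0) 0]; exact Ideal.zero_mem _⟩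
  | succ t ih =>
    set z := y 0
    set S := boundaryMonoid z
    let B := Localization S
    have hB : ∀ p : LTSeries (PrimeSpectrum B), p.length < t := by
      intro p
      have hinj : Function.Injective (PrimeSpectrum.comap (algebraMap A B)) :=
        PrimeSpectrum.localization_comap_injective B S
      have hmono : StrictMono (PrimeSpectrum.comap (algebraMap A B)) :=
        Monotone.strictMono_of_injective
          (fun a b h => Ideal.comap_mono h) hinj
      let q := p.map _ hmono
      have hdisj : Disjoint (S : Set A) (q.last.asIdeal : Set A) := by
        have : q.last = PrimeSpectrum.comap (algebraMap A B) p.last := LTSeries.last_map p _ hmono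
        rw [this]
        have := (PrimeSpectrum.localization_comap_range B S)
        have h2 : PrimeSpectrum.comap (algebraMap A B) p.last ∈
          Set.range (PrimeSpectrum.comap (algebraMap A B)) := ⟨_, rfl⟩
        rw [this] at h2
        exact h2
      have hz : z ∉ q.last.asIdeal := fun h =>
        Set.disjoint_left.1 hdisj (show z ∈ S from ⟨1, 0, by simp⟩) h
      have hne : q.last.asIdeal ⊔ Ideal.span {z} ≠ ⊤ := by
        intro h
        rw [Ideal.eq_top_iff_one, Submodule.mem_sup] at h
        obtain ⟨e, he, b, hb, h1⟩ := h
        obtain ⟨a, rfl⟩ := Ideal.mem_span_singleton'.1 hb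
        refine Set.disjoint_left.1 hdisj (show e ∈ S from ⟨0, -a, ?_⟩) he
        rw [← h1]; ring
      obtain ⟨m, hm, hle⟩ := Ideal.exists_le_maximal _ hne
      have hlt : q.last < ⟨m, hm.isPrime⟩ := by
        refine lt_of_le_of_ne (show q.last.asIdeal ≤ m from le_sup_left.trans hle) ?_
        intro h
        apply hz
        rw [h]
        exact hle (Ideal.mem_sup_right (Ideal.mem_span_singleton_self z))
      have := hA (q.snoc _ hlt)
      simp only [RelSeries.snoc_length] at this
      have : q.length < t := by omega
      exact this
    obtain ⟨n, hn⟩ := ih hB (fun i => algebraMap A B (Fin.tail y i))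
    have h1 : algebraMap A B (prd (Fin.tail y) ^ n) ∈
        (pwIdeal (Fin.tail y) (n + 1)).map (algebraMap A B) := by
      have e : (pwIdeal (Fin.tail y) (n + 1)).map (algebraMap A B) =
          pwIdeal (fun i => algebraMap A B (Fin.tail y i)) (n + 1) := by
        rw [pwIdeal, Ideal.map_span, ← Set.range_comp]
        simp [pwIdeal, Function.comp_def]
      rw [e]
      convert hn using 1
      simp [prd]
    rw [IsLocalization.algebraMap_mem_map_algebraMap_iff S] at h1
    obtain ⟨_, ⟨k, a, rfl⟩, h2⟩ := h1
    refine ⟨k + n, ?_⟩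
    rw [← Fin.cons_self_tail y, ← mem_pwSub_self, mem_pwSub_cons]
    refine ⟨- a * prd (Fin.tail y) ^ (k + n), z ^ n * (prd (Fin.tail y) ^ k *
      (z ^ k * (1 + a * z) * prd (Fin.tail y) ^ n)), ?_, ?_⟩
    · rw [mem_pwSub_self]
      refine Ideal.mul_mem_left _ _ ?_
      rw [← mem_pwSub_self] at h2
      have := prd_pow_smul_mem _ _ k _ h2
      rw [mem_pwSub_self, smul_eq_mul] at this
      convert this using 2
      ring
    · rw [prd_cons, smul_eq_mul]
      change (z * _) ^ (k + n) = _
      ring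

theorem length_lt_of_ringKrullDim_lt {A : Type*} [CommRing A] {t : ℕ}
    (h : ringKrullDim A < (t : WithBot ℕ∞)) (p : LTSeries (PrimeSpectrum A)) : p.length < t := by
  have := lt_of_le_of_lt (Order.LTSeries.length_le_krullDim p) h
  exact_mod_cast this

/-- `r` lies in the limit closure of `x`, written with a single exponent. -/
def InLim {t : ℕ} (x : Fin t → R) (r : R) : Prop :=
  ∃ k, prd x ^ k * r ∈ pwIdeal x (k + 1)

theorem mem_limitClosure_iff {t : ℕ} (x : Fin t → R) (r : R) :
    r ∈ limitClosure (M := R) x ↔ InLim x r := by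
  have hmono : Monotone (fun n : ℕ => (Ideal.span (Set.range fun i => x i ^ (n + 2)) •
      (⊤ : Submodule R R)).comap (LinearMap.lsmul R R ((∏ i, x i) ^ (n + 1)))) := by
    refine monotone_nat_of_le_succ fun n r hr => ?_
    have hr' : prd x ^ (n + 1) • r ∈ pwSub x (n + 2) R := hr
    have := prd_pow_smul_mem _ _ 1 _ hr'
    change prd x ^ (n + 1 + 1) • r ∈ pwSub x (n + 1 + 2) R
    rw [smul_smul] at this
    convert this using 2
    ring
  rw [limitClosure, Submodule.mem_iSup_of_directed _ hmono.directed_le]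
  constructor
  · rintro ⟨n, hn⟩
    have hn' : prd x ^ (n + 1) • r ∈ pwSub x (n + 2) R := hn
    exact ⟨n + 1, by rwa [mem_pwSub_self] at hn'⟩
  · rintro ⟨k, hk⟩
    refine ⟨k, ?_⟩
    change prd x ^ (k + 1) • r ∈ pwSub x (k + 2) R
    rw [← mem_pwSub_self] at hk
    have := prd_pow_smul_mem _ _ 1 _ hk
    rw [smul_eq_mul] at this ⊢
    convert this using 1
    ring

theorem IsTopLC.inLim_iff {t : ℕ} {x : Fin t → R} {H : Type*} [AddCommGroup H] [Module R H]
    {φ : ℕ → R →ₗ[R] H} (h : IsTopLC x φ) (r : R) : InLim x r ↔ φ 1 r = 0 := by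
  rw [h.zero_iff]
  simp only [mem_pwSub_self, smul_eq_mul, InLim, add_comm]

/-- Limit closures do not see an ideal of dimension less than the length of the sequence. -/
theorem inLim_quotient_iff {R : Type u} [CommRing R] {t : ℕ} (U : Ideal R)
    (hU : moduleDim R U < (t : WithBot ℕ∞)) (x : Fin t → R) (r : R) :
    InLim (fun i => Ideal.Quotient.mk U (x i)) (Ideal.Quotient.mk U r) ↔ InLim x r := by
  have hmap : ∀ (I : Ideal R) (y : Fin t → R) n, pwIdeal (fun i => Ideal.Quotient.mk I (y i)) n =
      (pwIdeal y n).map (Ideal.Quotient.mk I) := by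
    intro I y n
    rw [pwIdeal, pwIdeal, Ideal.map_span, ← Set.range_comp]
    simp [Function.comp_def]
  have hprd : ∀ (I : Ideal R) (y : Fin t → R), prd (fun i => Ideal.Quotient.mk I (y i)) =
      Ideal.Quotient.mk I (prd y) := by
    intro I y
    simp [prd]
  have hmem : ∀ (I J : Ideal R) (a : R), Ideal.Quotient.mk I a ∈ J.map (Ideal.Quotient.mk I) ↔
      ∃ s ∈ J, a - s ∈ I := by
    intro I J a
    rw [Ideal.mem_map_iff_of_surjective _ Ideal.Quotient.mk_surjective]
    refine exists_congr fun s => and_congr_right fun _ => ?_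
    rw [eq_comm, Ideal.Quotient.eq]
  simp only [InLim, hmap, hprd, ← map_pow, ← map_mul, hmem]
  constructor
  · rintro ⟨k, s, hs, hsu⟩
    obtain ⟨n, hn⟩ := exists_prd_pow_mem (A := R ⧸ Module.annihilator R U)
      (length_lt_of_ringKrullDim_lt hU) (fun i => Ideal.Quotient.mk _ (x i ^ (k + 1)))
    rw [hmap, hprd, ← map_pow, hmem, prd_pow, pwIdeal_pow] at hn
    obtain ⟨s', hs', ha⟩ := hn
    have h0 : (prd x ^ (k + 1)) ^ n * (prd x ^ k * r - s) =
        s' * (prd x ^ k * r - s) := by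
      have := Module.mem_annihilator.1 ha ⟨_, hsu⟩
      have := congrArg Subtype.val this
      simp only [SetLike.mk_smul_mk, smul_eq_mul, ZeroMemClass.coe_zero] at this
      rw [sub_mul, sub_eq_zero] at this
      exact this
    refine ⟨(k + 1) * n + k, ?_⟩
    have e : prd x ^ ((k + 1) * n + k) * r = s' * (prd x ^ k * r - s) +
      prd x ^ ((k + 1) * n) * s := by
      rw [← h0]; ring
    rw [e]
    refine Ideal.add_mem _ (Ideal.mul_mem_right _ _ ?_) ?_
    · convert hs' using 2
      ring
    · rw [← mem_pwSub_self] at hs ⊢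
      have := prd_pow_smul_mem _ _ ((k + 1) * n) _ hs
      rw [smul_eq_mul] at this
      convert this using 2
      ring
  · rintro ⟨k, hk⟩
    exact ⟨k, _, hk, by simp⟩

end Vanishing

/-! ### Artinian modules and modules small with respect to a sequence -/

section Artinian

variable {R : Type*} [CommRing R]

theorem antitone_stabilizes {N : Type*} [AddCommGroup N] [Module R N] (K : Submodule R N)
    [IsArtinian R K] (g : ℕ → Submodule R N) (hg : Antitone g) (hK : ∀ n, g n ≤ K) :
    ∃ n, ∀ m, n ≤ m → g m = g n := by
  obtain ⟨n, hn⟩ := IsArtinian.monotone_stabilizes (R := R) (M := K)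
    ⟨fun n => OrderDual.toDual ((g n).comap K.subtype),
      fun a b h => OrderDual.toDual_le_toDual.2 (Submodule.comap_mono (hg h))⟩
  refine ⟨n, fun m hm => ?_⟩
  have h1 : (g n).comap K.subtype = (g m).comap K.subtype :=
    congrArg OrderDual.ofDual (hn m hm)
  have h2 := congrArg (Submodule.map K.subtype) h1
  rw [Submodule.map_comap_subtype, Submodule.map_comap_subtype, inf_eq_right.2 (hK _),
    inf_eq_right.2 (hK _)] at h2
  exact h2.symm

/-- For a submodule `X`, the submodule `uᵏ (X ∩ (0 : uᵏ⁺¹))` of the kernel of `u`. -/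
def layer {N : Type*} [AddCommGroup N] [Module R N] (u : R) (k : ℕ) (X : Submodule R N) :
    Submodule R N :=
  (X ⊓ LinearMap.ker (LinearMap.lsmul R N (u ^ (k + 1)))).map (LinearMap.lsmul R N (u ^ k))

theorem mem_layer {N : Type*} [AddCommGroup N] [Module R N] {u : R} {k : ℕ} {X : Submodule R N}
    {n : N} : n ∈ layer u k X ↔ ∃ x ∈ X, u ^ (k + 1) • x = 0 ∧ u ^ k • x = n := by
  simp [layer, Submodule.mem_map, and_assoc]

/-- Melkersson's criterion: a `u`-power torsion module is Artinian if the kernel of `u` is. -/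
theorem isArtinian_of_ker {N : Type*} [AddCommGroup N] [Module R N] (u : R)
    (htors : ∀ n : N, ∃ k : ℕ, u ^ k • n = 0)
    (hK : IsArtinian R (LinearMap.ker (LinearMap.lsmul R N u))) : IsArtinian R N := by
  set K := LinearMap.ker (LinearMap.lsmul R N u) with hKdef
  rw [← monotone_stabilizes_iff_artinian]
  intro f
  set X : ℕ → Submodule R N := fun n => OrderDual.ofDual (f n) with hX
  have hXanti : Antitone X := fun a b h => OrderDual.ofDual_le_ofDual.2 (f.monotone h)
  have hlayerK : ∀ k Y, layer u k Y ≤ K := by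
    intro k Y n hn
    obtain ⟨x, -, h0, rfl⟩ := mem_layer.1 hn
    simp only [hKdef, LinearMap.mem_ker, LinearMap.lsmul_apply]
    rwa [smul_smul, ← pow_succ']
  have hmonoX : ∀ k {Y Z : Submodule R N}, Y ≤ Z → layer u k Y ≤ layer u k Z := by
    intro k Y Z h n hn
    obtain ⟨x, hx, h0, rfl⟩ := mem_layer.1 hn
    exact mem_layer.2 ⟨x, h hx, h0, rfl⟩
  have hantik : ∀ Y : Submodule R N, Antitone fun k => layer u k Y := by
    intro Y
    refine antitone_nat_of_succ_le fun k n hn => ?_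
    obtain ⟨x, hx, h0, rfl⟩ := mem_layer.1 hn
    exact mem_layer.2 ⟨u • x, Y.smul_mem _ hx, by rwa [smul_smul, ← pow_succ],
      by rw [smul_smul, ← pow_succ]⟩
  obtain ⟨i0, hi0⟩ := antitone_stabilizes K (fun i => layer u i (X i))
    (fun a b h => (hantik _ h).trans (hmonoX _ (hXanti h))) (fun i => hlayerK _ _)
  have hrow : ∀ k, ∃ j, ∀ m, j ≤ m → layer u k (X m) = layer u k (X j) := fun k =>
    antitone_stabilizes K (fun i => layer u k (X i)) (fun a b h => hmonoX _ (hXanti h))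
      (fun i => hlayerK _ _)
  choose J hJ using hrow
  set j0 := i0 + ∑ k ∈ Finset.range i0, J k with hj0
  have hlay : ∀ k m, j0 ≤ m → layer u k (X m) = layer u k (X j0) := by
    intro k m hm
    rcases lt_or_ge k i0 with hk | hk
    · have : J k ≤ j0 := (Finset.single_le_sum (f := J) (fun _ _ => Nat.zero_le _)
        (Finset.mem_range.2 hk)).trans (Nat.le_add_left _ _)
      rw [hJ k m (this.trans hm), hJ k j0 this]
    · have key : ∀ m, i0 ≤ m → layer u k (X m) = layer u i0 (X i0) := by
        intro m hm
        apply le_antisymm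
        · exact (hantik _ hk).trans (hmonoX _ (hXanti hm))
        · have := hi0 (max k m) (hk.trans (le_max_left _ _))
          rw [← this]
          exact (hantik _ (le_max_left k m)).trans (hmonoX _ (hXanti (le_max_right _ _)))
      have h0 : i0 ≤ j0 := Nat.le_add_right _ _
      rw [key m (h0.trans hm), key j0 h0]
  refine ⟨j0, fun m hm => ?_⟩
  change X j0 = X m
  apply le_antisymm _ (hXanti hm)
  have key : ∀ k x, x ∈ X j0 → u ^ k • x = 0 → x ∈ X m := by
    intro k
    induction k with
    | zero => intro x _ hx; rw [pow_zero, one_smul] at hx; rw [hx]; exact zero_mem _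
    | succ k ih =>
      intro x hx h0
      have h1 : u ^ k • x ∈ layer u k (X m) := by
        rw [hlay k m hm]; exact mem_layer.2 ⟨x, hx, h0, rfl⟩
      obtain ⟨x', hx', h0', e⟩ := mem_layer.1 h1
      have h2 := ih (x - x') (sub_mem hx (hXanti hm hx')) (by rw [smul_sub, e, sub_self])
      simpa using add_mem h2 hx'
  intro x hx
  obtain ⟨k, hk⟩ := htors x
  exact key k x hx hk

/-- A module is small with respect to `y` if it is Artinian and the submodule killed by all the
`y i` has finite length.  This is encoded recursively, by successively passing to the kernels of
`y 0, y 1, …`. -/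
def IsSmall : {t : ℕ} → (Fin t → R) → (C : Type u) → [AddCommGroup C] → [Module R C] → Prop
  | 0, _, C, _, _ => IsArtinian R C ∧ IsNoetherian R C
  | _ + 1, y, C, _, _ => IsArtinian R C ∧
      IsSmall (Fin.tail y) (LinearMap.ker (LinearMap.lsmul R C (y 0)))

theorem IsSmall.isArtinian {t : ℕ} {y : Fin t → R} {C : Type u} [AddCommGroup C] [Module R C]
    (h : IsSmall y C) : IsArtinian R C := by
  cases t with
  | zero => exact h.1
  | succ t => exact h.1

theorem IsSmall.of_injective {t : ℕ} {y : Fin t → R} {C D : Type u} [AddCommGroup C] [Module R C]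
    [AddCommGroup D] [Module R D] (h : IsSmall y D) (f : C →ₗ[R] D)
    (hf : Function.Injective f) : IsSmall y C := by
  induction t generalizing C D with
  | zero =>
    have := h.1
    have := h.2
    exact ⟨isArtinian_of_injective f hf, isNoetherian_of_injective f hf⟩
  | succ t ih =>
    have := h.1
    refine ⟨isArtinian_of_injective f hf, ih h.2 (f.restrict fun c hc => ?_) ?_⟩
    · simp only [LinearMap.mem_ker, LinearMap.lsmul_apply] at hc ⊢
      rw [← map_smul, hc, map_zero]
    · intro a b hab
      exact Subtype.ext (hf (congrArg Subtype.val hab))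

theorem IsSmall.of_exact {t : ℕ} {y : Fin t → R} {C D E : Type u} [AddCommGroup C] [Module R C]
    [AddCommGroup D] [Module R D] [AddCommGroup E] [Module R E] (hC : IsSmall y C)
    (hE : IsSmall y E) (f : C →ₗ[R] D) (g : D →ₗ[R] E) (hf : Function.Injective f)
    (hfg : LinearMap.range f = LinearMap.ker g) : IsSmall y D := by
  induction t generalizing C D E with
  | zero =>
    have := hC.1
    have := hC.2
    have := hE.1
    have := hE.2
    exact ⟨isArtinian_of_range_eq_ker f g hfg, isNoetherian_of_range_eq_ker f g hfg⟩
  | succ t ih =>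
    have := hC.1
    have := hE.1
    have hres : ∀ {A B : Type u} [AddCommGroup A] [Module R A] [AddCommGroup B] [Module R B]
        (f : A →ₗ[R] B) (a : A), a ∈ LinearMap.ker (LinearMap.lsmul R A (y 0)) →
        f a ∈ LinearMap.ker (LinearMap.lsmul R B (y 0)) := by
      intro A B _ _ _ _ f a ha
      simp only [LinearMap.mem_ker, LinearMap.lsmul_apply] at ha ⊢
      rw [← map_smul, ha, map_zero]
    refine ⟨isArtinian_of_range_eq_ker f g hfg, ih hC.2 hE.2 (f.restrict (hres f))
      (g.restrict (hres g)) ?_ ?_⟩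
    · intro a b hab
      exact Subtype.ext (hf (congrArg Subtype.val hab))
    · ext ⟨d, hd⟩
      simp only [LinearMap.mem_range, LinearMap.mem_ker, Subtype.exists]
      constructor
      · rintro ⟨c, hc, e⟩
        have e' : f c = d := congrArg Subtype.val e
        apply Subtype.ext
        change g d = 0
        rw [← LinearMap.mem_ker, ← hfg, ← e']
        exact ⟨c, rfl⟩
      · intro e
        have e' : g d = 0 := congrArg Subtype.val e
        rw [← LinearMap.mem_ker, ← hfg] at e'
        obtain ⟨c, rfl⟩ := e'
        refine ⟨c, ?_, rfl⟩
        simp only [LinearMap.mem_ker, LinearMap.lsmul_apply] at hd ⊢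
        apply hf
        rw [map_smul, hd, map_zero]

/-- Smallness passes to quotients.  For `N ≤ C` and `z = y 0`, the kernel of `z` on `C ⧸ N` is an
extension of a submodule of `N / zN` by a quotient of the kernel of `z` on `C`; and `N / zN` is
a quotient of the kernel of some `zᵏ` on `N`, since `N` is Artinian. -/
theorem IsSmall.quotient {t : ℕ} {y : Fin t → R} {C : Type u} [AddCommGroup C] [Module R C]
    (h : IsSmall y C) (N : Submodule R C) : IsSmall y (C ⧸ N) := by
  induction t generalizing C with
  | zero =>
    have := h.1
    have := h.2
    exact ⟨inferInstance, inferInstance⟩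
  | succ t ih =>
    have hart := h.1
    have hsurj : ∀ {A B : Type u} [AddCommGroup A] [Module R A] [AddCommGroup B] [Module R B]
        (f : A →ₗ[R] B), Function.Surjective f → IsSmall (Fin.tail y) A →
        IsSmall (Fin.tail y) B := by
      intro A B _ _ _ _ f hf hA
      exact (ih hA (LinearMap.ker f)).of_injective
        (f.quotKerEquivOfSurjective hf).symm.toLinearMap (LinearEquiv.injective _)
    refine ⟨inferInstance, ?_⟩
    set z := y 0 with hz
    -- the kernels of the powers of `z` on `N` are small with respect to the remaining elements
    have hker : ∀ k : ℕ, IsSmall (Fin.tail y) (LinearMap.ker (LinearMap.lsmul R N (z ^ k))) := by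
      have h1 : IsSmall (Fin.tail y) (LinearMap.ker (LinearMap.lsmul R N z)) := by
        refine h.2.of_injective ((N.subtype).restrict fun c hc => ?_) ?_
        · simp only [LinearMap.mem_ker, LinearMap.lsmul_apply] at hc ⊢
          rw [← map_smul, hc, map_zero]
        · intro a b hab
          have e := congrArg Subtype.val hab
          exact Subtype.ext (Subtype.ext e)
      intro k
      induction k with
      | zero =>
        refine h1.of_injective ((LinearMap.id).restrict fun c hc => ?_) ?_
        · simp only [LinearMap.mem_ker, LinearMap.lsmul_apply, pow_zero, one_smul] at hc
          simp [hc]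
        · intro a b hab
          have e := congrArg Subtype.val hab
          exact Subtype.ext e
      | succ k ihk =>
        refine h1.of_exact ihk ((LinearMap.id).restrict fun c hc => ?_)
          ((LinearMap.lsmul R N z).restrict fun c hc => ?_) ?_ ?_
        · simp only [LinearMap.mem_ker, LinearMap.lsmul_apply] at hc ⊢
          rw [LinearMap.id_apply, pow_succ, mul_smul, hc, smul_zero]
        · simp only [LinearMap.mem_ker, LinearMap.lsmul_apply] at hc ⊢
          rwa [smul_smul, ← pow_succ]
        · intro a b hab
          have e := congrArg Subtype.val hab
          exact Subtype.ext e
        · ext ⟨d, hd⟩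
          simp only [LinearMap.mem_range, LinearMap.mem_ker, Subtype.exists]
          constructor
          · rintro ⟨c, hc, hc', e⟩
            apply Subtype.ext
            have e' : ⟨c, hc⟩ = d := congrArg Subtype.val e
            change z • d = 0
            rw [← e']
            exact hc'
          · intro e
            exact ⟨d.1, d.2, congrArg Subtype.val e, rfl⟩
    have hNz : IsSmall (Fin.tail y) (N ⧸ rSub z N) := by
      have hN : IsArtinian R N := inferInstance
      obtain ⟨k, hk⟩ := antitone_stabilizes (⊤ : Submodule R N) (fun k => rSub (z ^ k) N)
        (by
          refine antitone_nat_of_succ_le fun k => ?_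
          rintro _ ⟨n, rfl⟩
          exact ⟨z • n, by simp [smul_smul, pow_succ, mul_comm]⟩) (fun _ => le_top)
      refine hsurj ((rSub z N).mkQ ∘ₗ Submodule.subtype _) ?_ (hker (k + 1))
      intro n
      obtain ⟨n, rfl⟩ := Submodule.mkQ_surjective _ n
      have h1 : z ^ (k + 1) • n ∈ rSub (z ^ (k + 1 + 1)) N := by
        rw [hk (k + 1 + 1) (by omega), ← hk (k + 1) (by omega)]
        exact ⟨n, rfl⟩
      obtain ⟨n', hn'⟩ := h1
      refine ⟨⟨n - z • n', ?_⟩, ?_⟩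
      · simp only [LinearMap.mem_ker, LinearMap.lsmul_apply] at hn' ⊢
        rw [smul_sub, ← hn', smul_smul, ← pow_succ, sub_self]
      · simp only [LinearMap.comp_apply, Submodule.subtype_apply, Submodule.mkQ_apply]
        rw [Submodule.Quotient.eq]
        exact ⟨-n', by simp⟩
    -- the map `c ↦ zc` from the kernel of `z` on `C ⧸ N` to `N / zN`
    set P : Submodule R C := N.comap (LinearMap.lsmul R C z) with hP
    have hPN : N ≤ P := fun n hn => N.smul_mem _ hn
    let g : P →ₗ[R] N ⧸ rSub z N := (rSub z N).mkQ ∘ₗ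
      (LinearMap.lsmul R C z).restrict (p := P) (q := N) (fun c hc => hc)
    have hgP : ∀ p : P, g p = 0 ↔ ∃ n ∈ N, z • (p.1 - n) = 0 := by
      intro p
      simp only [g, LinearMap.comp_apply, Submodule.mkQ_apply, Submodule.Quotient.mk_eq_zero]
      constructor
      · rintro ⟨n, hn⟩
        refine ⟨n, n.2, ?_⟩
        rw [smul_sub, sub_eq_zero]
        exact (congrArg Subtype.val hn).symm
      · rintro ⟨n, hn, e⟩
        refine ⟨⟨n, hn⟩, Subtype.ext ?_⟩
        rw [smul_sub, sub_eq_zero] at e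
        exact e.symm
    let N' : Submodule R P := N.comap P.subtype
    have hN' : N' ≤ LinearMap.ker g := by
      intro p hp
      rw [LinearMap.mem_ker, hgP]
      exact ⟨p.1, hp, by simp⟩
    have hsm : IsSmall (Fin.tail y) (P ⧸ N') := by
      let i : LinearMap.ker (LinearMap.lsmul R C z) →ₗ[R] P ⧸ N' := N'.mkQ ∘ₗ
        (LinearMap.id).restrict (fun c hc => by
          simp only [LinearMap.mem_ker, LinearMap.lsmul_apply] at hc
          simp [hP, hc])
      have hi : IsSmall (Fin.tail y) (LinearMap.range i) :=
        hsurj i.rangeRestrict i.surjective_rangeRestrict h.2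
      refine hi.of_exact hNz (LinearMap.range i).subtype (N'.liftQ g hN')
        (Submodule.subtype_injective _) ?_
      rw [Submodule.range_subtype]
      ext p
      obtain ⟨p, rfl⟩ := Submodule.mkQ_surjective _ p
      rw [LinearMap.mem_ker, Submodule.mkQ_apply, Submodule.liftQ_apply, hgP]
      constructor
      · rintro ⟨⟨c, hc⟩, e⟩
        simp only [i, LinearMap.comp_apply, Submodule.mkQ_apply] at e
        rw [eq_comm, Submodule.Quotient.eq] at e
        refine ⟨p.1 - c, e, ?_⟩
        rw [sub_sub_cancel]
        exact hc
      · rintro ⟨n, hn, e⟩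
        refine ⟨⟨p.1 - n, e⟩, ?_⟩
        simp only [i, LinearMap.comp_apply, Submodule.mkQ_apply]
        rw [eq_comm, Submodule.Quotient.eq]
        change p.1 - (p.1 - n) ∈ N
        rwa [sub_sub_cancel]
    have hex : ∀ c : LinearMap.ker (LinearMap.lsmul R (C ⧸ N) z), ∃ p : P,
        N.mkQ p.1 = c.1 := by
      rintro ⟨c, hc⟩
      obtain ⟨c, rfl⟩ := Submodule.mkQ_surjective _ c
      refine ⟨⟨c, ?_⟩, rfl⟩
      rw [LinearMap.mem_ker, LinearMap.lsmul_apply, ← map_smul, Submodule.mkQ_apply,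
        Submodule.Quotient.mk_eq_zero] at hc
      exact hc
    let j : P ⧸ N' →ₗ[R] LinearMap.ker (LinearMap.lsmul R (C ⧸ N) z) :=
      N'.liftQ ((N.mkQ ∘ₗ P.subtype).codRestrict _ (fun p => by
        rw [LinearMap.mem_ker, LinearMap.lsmul_apply, ← map_smul, LinearMap.comp_apply,
          Submodule.mkQ_apply, Submodule.Quotient.mk_eq_zero]
        exact p.2)) (by
        intro p hp
        rw [LinearMap.mem_ker]
        apply Subtype.ext
        change N.mkQ p.1 = 0
        rw [Submodule.mkQ_apply, Submodule.Quotient.mk_eq_zero]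
        exact hp)
    refine hsurj j ?_ hsm
    intro c
    obtain ⟨p, hp⟩ := hex c
    exact ⟨N'.mkQ p, Subtype.ext hp⟩

theorem IsSmall.of_surjective {t : ℕ} {y : Fin t → R} {C D : Type u} [AddCommGroup C]
    [Module R C] [AddCommGroup D] [Module R D] (h : IsSmall y C) (f : C →ₗ[R] D)
    (hf : Function.Surjective f) : IsSmall y D :=
  (h.quotient (LinearMap.ker f)).of_injective (f.quotKerEquivOfSurjective hf).symm.toLinearMap
    (LinearEquiv.injective _)

theorem IsSmall.isNoetherian_of_killed {t : ℕ} {y : Fin t → R} {C : Type u} [AddCommGroup C]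
    [Module R C] (h : IsSmall y C) (hy : ∀ i (c : C), y i • c = 0) : IsNoetherian R C := by
  induction t generalizing C with
  | zero => exact h.2
  | succ t ih =>
    have := ih h.2 (fun i c => Subtype.ext (hy i.succ c.1))
    refine isNoetherian_of_surjective
      (Submodule.subtype (LinearMap.ker (LinearMap.lsmul R C (y 0)))) ?_
    rw [LinearMap.range_eq_top]
    intro c
    exact ⟨⟨c, hy 0 c⟩, rfl⟩

end Artinian

/-! ### Smallness of the top local cohomology module -/

section
open scoped Pointwise
variable {R : Type u} [CommRing R]

/-- The kernel of `z` on the cokernel of `L → L_z` is a quotient of `L / zL`, via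
`ℓ ↦ [ℓ / z]`. -/
theorem exists_qfrac_one_of_smul_eq_zero {L : Type*} [AddCommGroup L] [Module R L] (z : R)
    (q : Qz z L) (hq : z • q = 0) : ∃ l : L, qfrac z 1 l = q := by
  obtain ⟨k, l, rfl⟩ := qfrac_surj z q
  cases k with
  | zero =>
    refine ⟨z • l, ?_⟩
    have := qfrac_steps z 0 1 l
    simpa using this
  | succ k =>
    have h1 : qfrac z k l = 0 := by
      rw [← qfrac_steps z k 1 l, pow_one, map_smul, hq]
    obtain ⟨i, l', h⟩ := (qfrac_eq_zero z k l).1 h1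
    refine ⟨l', ?_⟩
    rw [← qfrac_steps z 1 (i + k) l', ← h, show 1 + (i + k) = (k + 1) + i by ring, qfrac_steps]

theorem qfrac_torsion {L : Type*} [AddCommGroup L] [Module R L] (z : R) (q : Qz z L) :
    ∃ k : ℕ, z ^ k • q = 0 := by
  obtain ⟨k, l, rfl⟩ := qfrac_surj z q
  refine ⟨k, ?_⟩
  rw [← map_smul, qfrac_eq_zero]
  exact ⟨0, l, by simp⟩

theorem qfrac_one_zero_of_mem {L : Type*} [AddCommGroup L] [Module R L] (z : R) {l : L}
    (h : l ∈ rSub z L) : qfrac z 1 l = 0 := by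
  obtain ⟨l', rfl⟩ := h
  exact (qfrac_eq_zero z 1 _).2 ⟨0, l', by simp⟩

theorem isSMulRegular_quot_tors {M : Type*} [AddCommGroup M] [Module R M] (z : R) :
    IsSMulRegular (M ⧸ tors z M) z := by
  rw [isSMulRegular_iff_right_eq_zero_of_smul]
  intro m hm
  obtain ⟨m, rfl⟩ := Submodule.mkQ_surjective _ m
  rw [← map_smul, Submodule.mkQ_apply, Submodule.Quotient.mk_eq_zero] at hm
  obtain ⟨i, hi⟩ := hm
  rw [Submodule.mkQ_apply, Submodule.Quotient.mk_eq_zero]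
  exact ⟨i + 1, by rw [pow_succ, mul_smul, hi]⟩

theorem isSmall_zero_of_dim [IsNoetherianRing R] [IsLocalRing R] {M : Type u} [AddCommGroup M]
    [Module R M] [Module.Finite R M] (hdim : Module.supportDim R M ≤ 0) :
    IsArtinian R M ∧ IsNoetherian R M := by
  refine ⟨?_, inferInstance⟩
  rw [Module.supportDim_eq_ringKrullDim_quotient_annihilator] at hdim
  let I := Module.annihilator R M
  have hk : Ring.KrullDimLE 0 (R ⧸ I) := Ring.krullDimLE_iff.2 (by exact_mod_cast hdim)
  have : IsArtinianRing (R ⧸ I) := isArtinianRing_iff_krullDimLE_zero.2 hk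
  let _ : Module (R ⧸ I) M := Module.IsTorsionBySet.module (I := I)
    (fun m a => Module.mem_annihilator.1 a.2 m)
  have : IsScalarTower R (R ⧸ I) M := Module.IsTorsionBySet.isScalarTower _
  have : Module.Finite (R ⧸ I) M := Module.Finite.of_restrictScalars_finite R (R ⧸ I) M
  have h : IsArtinian (R ⧸ I) M := isArtinian_of_fg_of_artinian'
  exact isArtinian_of_surjective_algebraMap (S := R) (R := R ⧸ I) Ideal.Quotient.mk_surjective

/-- The top local cohomology of a finitely generated module of dimension at most `s` with respect
to `s` elements of the maximal ideal is small. -/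
theorem IsTopLC.isSmall [IsNoetherianRing R] [IsLocalRing R] {s : ℕ} {y : Fin s → R}
    (hy : ∀ i, y i ∈ maximalIdeal R) {M H : Type u} [AddCommGroup M] [Module R M]
    [Module.Finite R M] [AddCommGroup H] [Module R H] {φ : ℕ → M →ₗ[R] H} (h : IsTopLC y φ)
    (hdim : Module.supportDim R M ≤ s) : IsSmall y H := by
  induction s generalizing M H with
  | zero =>
    have := isSmall_zero_of_dim (M := M) (by simpa using hdim)
    have hs : IsSmall y M := this
    obtain ⟨f, hf⟩ := h.exists_equiv (isTopLC_zero (M := M) y)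
    exact hs.of_injective f.toLinearMap f.injective
  | succ s ih =>
    obtain ⟨z, w, rfl⟩ : ∃ z w, y = Fin.cons z w := ⟨y 0, Fin.tail y, by simp⟩
    have hz : z ∈ maximalIdeal R := by simpa using hy 0
    have hw : ∀ i, w i ∈ maximalIdeal R := fun i => by simpa using hy i.succ
    obtain ⟨L, _, _, ψ, hψ⟩ := exists_isTopLC w (M ⧸ tors z M)
    have hdim1 : Module.supportDim R ((M ⧸ tors z M) ⧸ rSub z (M ⧸ tors z M)) ≤ s := by
      have e : rSub z (M ⧸ tors z M) = z • (⊤ : Submodule R (M ⧸ tors z M)) := by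
        ext m
        simp [Submodule.mem_smul_pointwise_iff_exists]
      have h1 := Module.supportDim_quotSMulTop_succ_eq_supportDim
        (isSMulRegular_quot_tors (M := M) z) hz
      have h2 := Module.supportDim_le_of_surjective (tors z M).mkQ (Submodule.mkQ_surjective _)
      have h3 := (h1.trans_le h2).trans hdim
      rw [e]
      push_cast at h3
      exact ENat.WithBot.add_le_add_one_right_iff.1 h3
    have hs := ih hw (hψ.quot z) hdim1
    have hsmallker : IsSmall w (LinearMap.ker (LinearMap.lsmul R (Qz z L) z)) := by
      let g : (L ⧸ rSub z L) →ₗ[R] Qz z L := Submodule.liftQ _ (qfrac z 1)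
        (fun l hl => qfrac_one_zero_of_mem z hl)
      refine hs.of_surjective (g.codRestrict _ fun l => ?_) ?_
      · obtain ⟨l, rfl⟩ := Submodule.mkQ_surjective _ l
        simp only [LinearMap.mem_ker, LinearMap.lsmul_apply]
        change z • qfrac z 1 l = 0
        rw [← map_smul]
        exact qfrac_one_zero_of_mem z ⟨l, rfl⟩
      · rintro ⟨q, hq⟩
        obtain ⟨l, hl⟩ := exists_qfrac_one_of_smul_eq_zero z q hq
        exact ⟨Submodule.Quotient.mk l, Subtype.ext hl⟩
    have hQ : IsSmall (Fin.cons z w : Fin (s + 1) → R) (Qz z L) := by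
      refine ⟨isArtinian_of_ker z (qfrac_torsion z) ?_, ?_⟩
      · exact hsmallker.isArtinian
      · exact hsmallker
    obtain ⟨f, hf⟩ := h.exists_equiv (hψ.cons z).of_quot_tors
    exact hQ.of_injective f.toLinearMap f.injective
end

/-! ### Čech complexes as ungraded differential modules -/

section
variable {R : Type u} [CommRing R]

/-- A differential module: a module with an endomorphism of square zero. -/
structure DMod (R : Type u) [CommRing R] where
  /-- the underlying type -/
  carrier : Type u
  [grp : AddCommGroup carrier]
  [mod : Module R carrier]
  /-- the differential -/
  d : carrier →ₗ[R] carrier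
  d_d : ∀ n, d (d n) = 0

attribute [instance] DMod.grp DMod.mod

/-- The homology `ker d / im d`, realized inside the cokernel of `d`. -/
abbrev DMod.Hm (N : DMod R) : Submodule R (N.carrier ⧸ LinearMap.range N.d) :=
  (LinearMap.ker N.d).map (LinearMap.range N.d).mkQ

/-- The map induced by `f` on localizations at `z`. -/
noncomputable def locMap (z : R) {M N : Type*} [AddCommGroup M] [Module R M] [AddCommGroup N]
    [Module R N] (f : M →ₗ[R] N) : Loc z M →ₗ[R] Loc z N :=
  IsLocalizedModule.map (Submonoid.powers z)
    (LocalizedModule.mkLinearMap (Submonoid.powers z) M)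
    (LocalizedModule.mkLinearMap (Submonoid.powers z) N) f

theorem pow_smul_loc_injective (z : R) {M : Type*} [AddCommGroup M] [Module R M] (k : ℕ)
    {a b : Loc z M} (h : z ^ k • a = z ^ k • b) : a = b := by
  rw [← sub_eq_zero, ← smul_sub] at h
  rw [← sub_eq_zero]
  obtain ⟨j, m, hm⟩ := frac_surj z (a - b)
  rw [← hm] at h ⊢
  rw [← map_smul, frac_eq_zero] at h
  obtain ⟨i, hi⟩ := h
  rw [frac_eq_zero]
  exact ⟨i + k, by rw [pow_add, mul_smul, hi]⟩

theorem frac_zero_eq (z : R) {M : Type*} [AddCommGroup M] [Module R M] (m : M) :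
    frac z 0 m = LocalizedModule.mkLinearMap (Submonoid.powers z) M m := by
  change LocalizedModule.mk m _ = LocalizedModule.mk m 1
  congr 1
  exact Subtype.ext (pow_zero z)

@[simp]
theorem locMap_frac (z : R) {M N : Type*} [AddCommGroup M] [Module R M] [AddCommGroup N]
    [Module R N] (f : M →ₗ[R] N) (k : ℕ) (m : M) : locMap z f (frac z k m) = frac z k (f m) := by
  apply pow_smul_loc_injective z k
  have h1 := smul_frac z 0 k m
  have h2 := smul_frac z 0 k (f m)
  rw [zero_add] at h1 h2
  rw [← map_smul, h1, h2]
  rw [frac_zero_eq, frac_zero_eq]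
  exact IsLocalizedModule.map_apply _ _ _ f m

/-- The cone (up to shift) of the localization map `N → N_z`, with differential
`(n, ν) ↦ (d n, n / 1 - d ν)`. -/
noncomputable def DMod.cone (z : R) (N : DMod R) : DMod R where
  carrier := N.carrier × Loc z N.carrier
  d := LinearMap.prod (N.d ∘ₗ LinearMap.fst R _ _)
    (frac z 0 ∘ₗ LinearMap.fst R _ _ - locMap z N.d ∘ₗ LinearMap.snd R _ _)
  d_d := by
    rintro ⟨n, ν⟩
    obtain ⟨k, m, rfl⟩ := frac_surj z ν
    simp [N.d_d]

theorem DMod.cone_d (z : R) (N : DMod R) (n : N.carrier) (ν : Loc z N.carrier) :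
    (N.cone z).d ((n, ν) : N.carrier × Loc z N.carrier) = (N.d n, frac z 0 n - locMap z N.d ν) :=
  rfl

/-- The total Čech complex of `M` with respect to `w`, as an ungraded differential module. -/
noncomputable def cech : {t : ℕ} → (Fin t → R) → (M : Type u) → [AddCommGroup M] → [Module R M] →
    DMod R
  | 0, _, M, _, _ => { carrier := M, d := 0, d_d := by simp }
  | _ + 1, w, M, _, _ => (cech (Fin.tail w) M).cone (w 0)

/-- The map of Čech complexes induced by a homomorphism of modules. -/
noncomputable def cechMap : {t : ℕ} → (w : Fin t → R) → {M N : Type u} → [AddCommGroup M] →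
    [Module R M] → [AddCommGroup N] → [Module R N] → (M →ₗ[R] N) →
    ((cech w M).carrier →ₗ[R] (cech w N).carrier)
  | 0, _, _, _, _, _, _, _, f => f
  | _ + 1, w, _, _, _, _, _, _, f =>
    LinearMap.prodMap (cechMap (Fin.tail w) f) (locMap (w 0) (cechMap (Fin.tail w) f))

variable {M N P : Type u} [AddCommGroup M] [Module R M] [AddCommGroup N] [Module R N]
  [AddCommGroup P] [Module R P]

theorem locMap_injective (z : R) {f : M →ₗ[R] N} (hf : Function.Injective f) :
    Function.Injective (locMap z f) := by
  rw [injective_iff_map_eq_zero]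
  intro a ha
  obtain ⟨k, m, rfl⟩ := frac_surj z a
  rw [locMap_frac, frac_eq_zero] at ha
  obtain ⟨i, hi⟩ := ha
  rw [frac_eq_zero]
  exact ⟨i, hf (by rw [map_smul, hi, map_zero])⟩

theorem locMap_surjective (z : R) {f : M →ₗ[R] N} (hf : Function.Surjective f) :
    Function.Surjective (locMap z f) := by
  intro a
  obtain ⟨k, m, rfl⟩ := frac_surj z a
  obtain ⟨m, rfl⟩ := hf m
  exact ⟨frac z k m, locMap_frac z f k m⟩

theorem locMap_exact (z : R) {f : M →ₗ[R] N} {g : N →ₗ[R] P} (h : Function.Exact f g) :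
    Function.Exact (locMap z f) (locMap z g) := by
  intro a
  constructor
  · intro ha
    obtain ⟨k, m, rfl⟩ := frac_surj z a
    rw [locMap_frac, frac_eq_zero] at ha
    obtain ⟨i, hi⟩ := ha
    rw [← map_smul] at hi
    obtain ⟨m', hm'⟩ := (h _).1 hi
    refine ⟨frac z (k + i) m', ?_⟩
    rw [locMap_frac, hm', frac_steps]
  · rintro ⟨a, rfl⟩
    obtain ⟨k, m, rfl⟩ := frac_surj z a
    rw [locMap_frac, locMap_frac, h.apply_apply_eq_zero, map_zero]

theorem cechMap_d {t : ℕ} (w : Fin t → R) (f : M →ₗ[R] N) (c : (cech w M).carrier) :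
    (cech w N).d (cechMap w f c) = cechMap w f ((cech w M).d c) := by
  induction t with
  | zero => exact (map_zero f).symm
  | succ t ih =>
    obtain ⟨n, ν⟩ := c
    obtain ⟨k, m, rfl⟩ := frac_surj _ ν
    change (((cech (Fin.tail w) N).cone (w 0)).d (_, _) : _ × _) = (_, _)
    rw [DMod.cone_d]
    refine Prod.ext (ih _ _) ?_
    change frac (w 0) 0 (cechMap (Fin.tail w) f n) - _ = locMap (w 0) (cechMap (Fin.tail w) f)
      (frac (w 0) 0 n - locMap (w 0) (cech (Fin.tail w) M).d (frac (w 0) k m))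
    simp [ih]

theorem cechMap_injective {t : ℕ} (w : Fin t → R) {f : M →ₗ[R] N} (hf : Function.Injective f) :
    Function.Injective (cechMap w f) := by
  induction t with
  | zero => exact hf
  | succ t ih => exact (ih _).prodMap (locMap_injective _ (ih _))

theorem cechMap_surjective {t : ℕ} (w : Fin t → R) {f : M →ₗ[R] N}
    (hf : Function.Surjective f) : Function.Surjective (cechMap w f) := by
  induction t with
  | zero => exact hf
  | succ t ih => exact (ih _).prodMap (locMap_surjective _ (ih _))

theorem cechMap_exact {t : ℕ} (w : Fin t → R) {f : M →ₗ[R] N} {g : N →ₗ[R] P}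
    (h : Function.Exact f g) : Function.Exact (cechMap w f) (cechMap w g) := by
  induction t with
  | zero => exact h
  | succ t ih =>
    rintro ⟨n, ν⟩
    have h1 := ih (Fin.tail w) n
    have h2 := locMap_exact (w 0) (ih (Fin.tail w)) ν
    constructor
    · intro e
      obtain ⟨n', hn'⟩ := h1.1 (congrArg Prod.fst e)
      obtain ⟨ν', hν'⟩ := h2.1 (congrArg Prod.snd e)
      exact ⟨(n', ν'), Prod.ext hn' hν'⟩
    · rintro ⟨⟨n', ν'⟩, e⟩
      exact Prod.ext (h1.2 ⟨n', congrArg Prod.fst e⟩) (h2.2 ⟨ν', congrArg Prod.snd e⟩)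

theorem cechMap_lsmul {t : ℕ} (w : Fin t → R) (u : R) (c : (cech w M).carrier) :
    cechMap w (LinearMap.lsmul R M u) c = u • c := by
  induction t with
  | zero => rfl
  | succ t ih =>
    obtain ⟨n, ν⟩ := c
    obtain ⟨k, m, rfl⟩ := frac_surj _ ν
    refine Prod.ext (ih _ _) ?_
    change locMap (w 0) (cechMap (Fin.tail w) (LinearMap.lsmul R M u)) (frac (w 0) k m) =
      u • frac (w 0) k m
    rw [locMap_frac, ih, map_smul]

/-- An element annihilating `M` annihilates its Čech complex. -/
theorem cech_smul_eq_zero {t : ℕ} (w : Fin t → R) {u : R} (hu : ∀ m : M, u • m = 0)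
    (c : (cech w M).carrier) : u • c = 0 := by
  induction t with
  | zero => exact hu c
  | succ t ih =>
    obtain ⟨n, ν⟩ := c
    obtain ⟨k, m, rfl⟩ := frac_surj _ ν
    refine Prod.ext (ih _ _) ?_
    change u • frac (w 0) k m = 0
    rw [← map_smul, ih, map_zero]

end

/-! ### Artinian homology of Čech complexes -/

section
variable {R : Type u} [CommRing R]

theorem DMod.mk_mem_Hm {N : DMod R} {n : N.carrier} (hn : N.d n = 0) :
    (LinearMap.range N.d).mkQ n ∈ N.Hm := ⟨n, hn, rfl⟩

/-- The long exact homology sequence at the middle term shows that Artinianness of homology is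
stable under extensions. -/
theorem DMod.artinian_of_exact {A B C : DMod R} (f : A.carrier →ₗ[R] B.carrier)
    (g : B.carrier →ₗ[R] C.carrier) (hf : ∀ a, B.d (f a) = f (A.d a))
    (hg : ∀ b, C.d (g b) = g (B.d b)) (hinj : Function.Injective f)
    (hsurj : Function.Surjective g) (hex : Function.Exact f g)
    (hA : IsArtinian R A.Hm) (hC : IsArtinian R C.Hm) : IsArtinian R B.Hm := by
  have hmap : ∀ {A B : DMod R} (f : A.carrier →ₗ[R] B.carrier)
      (_ : ∀ a, B.d (f a) = f (A.d a)),
      LinearMap.range A.d ≤ (LinearMap.range B.d).comap f := by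
    rintro A B f hf _ ⟨a, rfl⟩
    exact ⟨f a, hf a⟩
  have hmap2 : ∀ {A B : DMod R} (f : A.carrier →ₗ[R] B.carrier)
      (hf : ∀ a, B.d (f a) = f (A.d a)), ∀ h ∈ A.Hm,
      Submodule.mapQ _ _ f (hmap f hf) h ∈ B.Hm := by
    rintro A B f hf _ ⟨a, ha, rfl⟩
    refine ⟨f a, ?_, rfl⟩
    rw [SetLike.mem_coe, LinearMap.mem_ker] at ha ⊢
    rw [hf, ha, map_zero]
  let F : A.Hm →ₗ[R] B.Hm := (Submodule.mapQ _ _ f (hmap f hf)).restrict (hmap2 f hf)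
  let G : B.Hm →ₗ[R] C.Hm := (Submodule.mapQ _ _ g (hmap g hg)).restrict (hmap2 g hg)
  refine isArtinian_of_range_eq_ker F G ?_
  ext ⟨_, b, hb, rfl⟩
  have hb : B.d b = 0 := hb
  constructor
  · rintro ⟨⟨_, a, ha, rfl⟩, e⟩
    have e' : (LinearMap.range B.d).mkQ (f a) = (LinearMap.range B.d).mkQ b :=
      congrArg Subtype.val e
    apply Subtype.ext
    change Submodule.mapQ _ _ g (hmap g hg) ((LinearMap.range B.d).mkQ b) = 0
    rw [← e']
    change (LinearMap.range C.d).mkQ (g (f a)) = 0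
    rw [hex.apply_apply_eq_zero, map_zero]
  · intro e
    have e' : (LinearMap.range C.d).mkQ (g b) = 0 := congrArg Subtype.val e
    rw [Submodule.mkQ_apply, Submodule.Quotient.mk_eq_zero] at e'
    obtain ⟨c, hc⟩ := e'
    obtain ⟨b', rfl⟩ := hsurj c
    have h1 : g (b - B.d b') = 0 := by rw [map_sub, ← hg, hc, sub_self]
    obtain ⟨a, ha⟩ := (hex _).1 h1
    have hda : A.d a = 0 := by
      apply hinj
      rw [← hf, ha, map_sub, hb, B.d_d, map_zero, sub_zero]
    refine ⟨⟨_, DMod.mk_mem_Hm hda⟩, Subtype.ext ?_⟩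
    change (LinearMap.range B.d).mkQ (f a) = (LinearMap.range B.d).mkQ b
    rw [ha, map_sub, sub_eq_self]
    simp

theorem isArtinian_range_of_ker_le {Y A B : Type*} [AddCommGroup Y] [Module R Y] [AddCommGroup A]
    [Module R A] [AddCommGroup B] [Module R B] (α : Y →ₗ[R] A) (β : Y →ₗ[R] B)
    (h : LinearMap.ker α ≤ LinearMap.ker β) (hα : IsArtinian R (LinearMap.range α)) :
    IsArtinian R (LinearMap.range β) := by
  have h1 : IsArtinian R (Y ⧸ LinearMap.ker α) :=
    isArtinian_of_linearEquiv α.quotKerEquivRange.symm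
  refine isArtinian_of_surjective _ ((Submodule.liftQ _ β h).codRestrict (LinearMap.range β) ?_) ?_
  · intro q
    obtain ⟨y, rfl⟩ := Submodule.mkQ_surjective _ q
    exact ⟨y, rfl⟩
  · rintro ⟨_, y, rfl⟩
    exact ⟨Submodule.Quotient.mk y, rfl⟩

/-- If `u` is injective on `C` and `g : C → D` is the cokernel of `u`, then the kernel of `u` on
the homology of `C` is the image of the connecting map, hence a quotient of the homology of
`D`. -/
theorem DMod.artinian_ker_of_coker {C D : DMod R} (u : R) (g : C.carrier →ₗ[R] D.carrier)
    (hg : ∀ b, D.d (g b) = g (C.d b)) (hu : Function.Injective (LinearMap.lsmul R C.carrier u))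
    (hsurj : Function.Surjective g) (hex : Function.Exact (LinearMap.lsmul R C.carrier u) g)
    (hD : IsArtinian R D.Hm) : IsArtinian R (LinearMap.ker (LinearMap.lsmul R C.Hm u)) := by
  let Y : Submodule R C.carrier := LinearMap.ker (g ∘ₗ C.d)
  have hY : ∀ y : Y, C.d y ∈ LinearMap.range (LinearMap.lsmul R C.carrier u) :=
    fun y => (hex _).1 y.2
  let α : Y →ₗ[R] (D.carrier ⧸ LinearMap.range D.d) :=
    (LinearMap.range D.d).mkQ ∘ₗ g ∘ₗ Y.subtype
  let δ : Y →ₗ[R] C.carrier := (LinearEquiv.ofInjective _ hu).symm.toLinearMap ∘ₗ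
    (C.d ∘ₗ Y.subtype).codRestrict _ hY
  have hδ : ∀ y : Y, u • δ y = C.d y := by
    intro y
    have := congrArg Subtype.val ((LinearEquiv.ofInjective _ hu).apply_symm_apply ⟨C.d y, hY y⟩)
    exact this
  let β : Y →ₗ[R] (C.carrier ⧸ LinearMap.range C.d) := (LinearMap.range C.d).mkQ ∘ₗ δ
  have hα : IsArtinian R (LinearMap.range α) := by
    refine isArtinian_of_injective (Submodule.inclusion ?_) (Submodule.inclusion_injective _)
      (P := D.Hm)
    rintro _ ⟨y, rfl⟩
    refine DMod.mk_mem_Hm ?_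
    change D.d (g y) = 0
    rw [hg]
    exact y.2
  have hβ : IsArtinian R (LinearMap.range β) := by
    refine isArtinian_range_of_ker_le α β ?_ hα
    intro y hy
    have hy : (LinearMap.range D.d).mkQ (g y) = 0 := hy
    rw [Submodule.mkQ_apply, Submodule.Quotient.mk_eq_zero] at hy
    obtain ⟨e, he⟩ := hy
    obtain ⟨e, rfl⟩ := hsurj e
    have h1 : g (y - C.d e) = 0 := by rw [map_sub, ← hg, he, sub_self]
    obtain ⟨f, hf⟩ := (hex _).1 h1
    rw [LinearMap.mem_ker]
    change (LinearMap.range C.d).mkQ (δ y) = 0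
    rw [Submodule.mkQ_apply, Submodule.Quotient.mk_eq_zero]
    refine ⟨f, hu ?_⟩
    change u • C.d f = u • δ y
    have hf : u • f = y - C.d e := hf
    rw [hδ, ← map_smul, hf, map_sub, C.d_d, sub_zero]
  refine isArtinian_of_injective (((C.Hm).subtype ∘ₗ Submodule.subtype _).codRestrict
    (LinearMap.range β) ?_) ?_
  · rintro ⟨⟨_, c, hc, rfl⟩, hk⟩
    have hc : C.d c = 0 := hc
    have hk : u • (LinearMap.range C.d).mkQ c = 0 := congrArg Subtype.val hk
    rw [← map_smul, Submodule.mkQ_apply, Submodule.Quotient.mk_eq_zero] at hk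
    obtain ⟨y, hy⟩ := hk
    have hyY : y ∈ Y := by
      change g (C.d y) = 0
      rw [hy]
      exact hex.apply_apply_eq_zero c
    refine ⟨⟨y, hyY⟩, ?_⟩
    change (LinearMap.range C.d).mkQ (δ ⟨y, hyY⟩) = (LinearMap.range C.d).mkQ c
    congr 1
    apply hu
    exact (hδ ⟨y, hyY⟩).trans hy
  · intro a b hab
    have e := congrArg Subtype.val hab
    exact Subtype.ext (Subtype.ext e)

/-- Every cycle is carried to a boundary by some power of `z`. -/
def DMod.Tor (z : R) (N : DMod R) : Prop := ∀ n, N.d n = 0 → ∃ k e, N.d e = z ^ k • n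

theorem DMod.tor_cone (z : R) (N : DMod R) : (N.cone z).Tor z := by
  rintro ⟨n, ν⟩ h
  obtain ⟨k, m, rfl⟩ := frac_surj z ν
  rw [DMod.cone_d] at h
  have h1 : N.d n = 0 := congrArg Prod.fst h
  have h2 : frac z 0 n - locMap z N.d (frac z k m) = 0 := congrArg Prod.snd h
  rw [locMap_frac, ← frac_steps z 0 k n, zero_add, ← map_sub, frac_eq_zero] at h2
  obtain ⟨i, hi⟩ := h2
  rw [smul_sub, sub_eq_zero, smul_smul, ← pow_add] at hi
  refine ⟨i + k, ((z ^ i • m, 0) : N.carrier × Loc z N.carrier), ?_⟩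
  rw [DMod.cone_d]
  refine Prod.ext ?_ ?_
  · change N.d (z ^ i • m) = z ^ (i + k) • n
    rw [map_smul, hi]
  · change frac z 0 (z ^ i • m) - locMap z N.d 0 = z ^ (i + k) • frac z k m
    rw [map_zero, sub_zero, ← frac_steps z 0 k, zero_add, map_smul, map_smul, smul_smul,
      ← pow_add, add_comm]

theorem DMod.Tor.cone {z : R} {N : DMod R} (hN : N.Tor z) (v : R) : (N.cone v).Tor z := by
  rintro ⟨n, ν⟩ h
  rw [DMod.cone_d] at h
  have h1 : N.d n = 0 := congrArg Prod.fst h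
  have h2 : frac v 0 n - locMap v N.d ν = 0 := congrArg Prod.snd h
  obtain ⟨k, a, ha⟩ := hN n h1
  obtain ⟨j, m, hm⟩ := frac_surj v (z ^ k • ν - frac v 0 a)
  have h3 : frac v j (N.d m) = 0 := by
    rw [← locMap_frac, hm, map_sub, locMap_frac, map_smul, ← sub_eq_zero.1 h2, ha, map_smul,
      sub_self]
  obtain ⟨i, hi⟩ := (frac_eq_zero v j _).1 h3
  rw [← map_smul] at hi
  obtain ⟨l, b, hb⟩ := hN _ hi
  refine ⟨l + k, ((z ^ l • a, - frac v (j + i) b) : N.carrier × Loc v N.carrier), ?_⟩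
  rw [DMod.cone_d]
  refine Prod.ext ?_ ?_
  · change N.d (z ^ l • a) = z ^ (l + k) • n
    rw [map_smul, ha, smul_smul, pow_add]
  · change frac v 0 (z ^ l • a) - locMap v N.d (- frac v (j + i) b) = z ^ (l + k) • ν
    rw [map_neg, locMap_frac, hb, map_smul, map_smul, frac_steps, hm, smul_sub, smul_smul,
      pow_add]
    abel

theorem cech_tor {t : ℕ} (w : Fin t → R) (M : Type u) [AddCommGroup M] [Module R M] (i : Fin t) :
    (cech w M).Tor (w i) := by
  induction t with
  | zero => exact i.elim0
  | succ t ih =>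
    refine Fin.cases ?_ (fun i => ?_) i
    · exact DMod.tor_cone (w 0) _
    · exact (ih (Fin.tail w) i).cone (w 0)

theorem cech_artinian_of_killed {t : ℕ} (w : Fin t → R) (M : Type u) [AddCommGroup M] [Module R M]
    [IsArtinian R M] (hw : ∀ i (m : M), w i • m = 0) : IsArtinian R (cech w M).carrier := by
  induction t with
  | zero => exact ‹IsArtinian R M›
  | succ t ih =>
    have h1 := ih (Fin.tail w) (fun i => hw i.succ)
    have h2 : Subsingleton (Loc (w 0) (cech (Fin.tail w) M).carrier) := by
      refine subsingleton_of_forall_eq 0 fun a => ?_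
      obtain ⟨k, m, rfl⟩ := frac_surj (w 0) a
      rw [frac_eq_zero]
      exact ⟨1, by rw [pow_one]; exact cech_smul_eq_zero _ (hw 0) m⟩
    have h3 : IsArtinian R (Loc (w 0) (cech (Fin.tail w) M).carrier) := inferInstance
    exact inferInstanceAs (IsArtinian R
      ((cech (Fin.tail w) M).carrier × Loc (w 0) (cech (Fin.tail w) M).carrier))

/-- The Čech homology of a finitely generated module, with respect to elements that generate the
maximal ideal up to radical modulo the annihilator, is Artinian. -/
theorem cech_artinian [IsNoetherianRing R] [IsLocalRing R] {t : ℕ} (w : Fin t → R)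
    (hw : ∀ i, w i ∈ maximalIdeal R) (I₀ : Ideal R)
    (hI₀ : maximalIdeal R ≤ (Ideal.span (Set.range w) ⊔ I₀).radical) (M : Type u) [AddCommGroup M]
    [Module R M] [Module.Finite R M] (hM : ∀ a ∈ I₀, ∀ m : M, a • m = 0) :
    IsArtinian R (cech w M).Hm := by
  -- Noetherian induction on an ideal killing `M`
  suffices H : ∀ I : Ideal R, I₀ ≤ I → ∀ (M : Type u) [AddCommGroup M] [Module R M]
      [Module.Finite R M], (∀ a ∈ I, ∀ m : M, a • m = 0) → IsArtinian R (cech w M).Hm from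
    H I₀ le_rfl M hM
  intro I
  induction I using WellFoundedGT.induction with
  | ind I ihI =>
  intro hI M _ _ hfin
  induction hfin using IsNoetherianRing.induction_on_isQuotientEquivQuotientPrime R with
  | subsingleton N =>
    intro _
    have := cech_artinian_of_killed w N (fun i m => Subsingleton.elim _ _)
    infer_instance
  | exact N₁ N₂ N₃ f g hf hg hex h1 h3 =>
    intro hN
    refine DMod.artinian_of_exact (cechMap w f) (cechMap w g) (cechMap_d w f) (cechMap_d w g)
      (cechMap_injective w hf) (cechMap_surjective w hg) (cechMap_exact w hex) (h1 ?_) (h3 ?_)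
    · intro a ha m
      apply hf
      rw [map_smul, hN a ha, map_zero]
    · intro a ha m
      obtain ⟨m, rfl⟩ := hg m
      rw [← map_smul, hN a ha, map_zero]
  | quotient N p f =>
    intro hN
    have hIp : I ≤ p.1 := by
      intro a ha
      have h1 := congrArg f (hN a ha (f.symm (Ideal.Quotient.mk p.1 1)))
      rw [map_smul, f.apply_symm_apply, map_zero] at h1
      rw [← Ideal.Quotient.eq_zero_iff_mem, ← h1, Algebra.smul_def, map_one, mul_one]
      rfl
    have hpN : ∀ a ∈ p.1, ∀ m : N, a • m = 0 := by
      intro a ha m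
      apply f.injective
      rw [map_smul, map_zero, Algebra.smul_def]
      change Ideal.Quotient.mk p.1 a * _ = 0
      rw [Ideal.Quotient.eq_zero_iff_mem.2 ha, zero_mul]
    by_cases hp : maximalIdeal R ≤ p.1
    · have hpm : p.1 = maximalIdeal R := le_antisymm (le_maximalIdeal p.2.ne_top) hp
      have hart : IsArtinian R N := by
        refine (isSmall_zero_of_dim (M := N) ?_).1
        rw [Module.supportDim_eq_of_equiv f, Module.supportDim_quotient_eq_ringKrullDim, hpm]
        exact (ringKrullDim_eq_zero_of_field (ResidueField R)).le
      have := cech_artinian_of_killed w N (fun i m => hpN _ (hp (hw i)) m)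
      infer_instance
    · obtain ⟨u, hum, hup⟩ := Set.not_subset.1 hp
      have hreg : Function.Injective (LinearMap.lsmul R N u) := by
        rw [injective_iff_map_eq_zero]
        intro m hm
        have h1 := congrArg f hm
        rw [LinearMap.lsmul_apply, map_smul, map_zero, Algebra.smul_def] at h1
        have h2 : f m = 0 := by
          refine (mul_eq_zero.1 h1).resolve_left ?_
          intro h
          exact hup (Ideal.Quotient.eq_zero_iff_mem.1 h)
        exact (map_eq_zero_iff f f.injective).1 h2
      have hquot : IsArtinian R (cech w (N ⧸ rSub u N)).Hm := by
        refine ihI (I ⊔ Ideal.span {u}) ?_ (hI.trans le_sup_left) (N ⧸ rSub u N) ?_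
        · refine lt_of_le_of_ne le_sup_left fun h => hup (hIp ?_)
          rw [h]
          exact Ideal.mem_sup_right (Ideal.mem_span_singleton_self u)
        · intro a ha m
          obtain ⟨m, rfl⟩ := Submodule.mkQ_surjective _ m
          obtain ⟨b, hb, c, hc, rfl⟩ := Submodule.mem_sup.1 ha
          obtain ⟨c, rfl⟩ := Ideal.mem_span_singleton'.1 hc
          rw [add_smul, ← map_smul, hN b hb, map_zero, zero_add, ← map_smul, Submodule.mkQ_apply,
            Submodule.Quotient.mk_eq_zero]
          exact ⟨c • m, by simp [mul_smul, smul_comm c u m]⟩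
      have hker : IsArtinian R (LinearMap.ker (LinearMap.lsmul R (cech w N).Hm u)) := by
        have e : LinearMap.lsmul R (cech w N).carrier u = cechMap w (LinearMap.lsmul R N u) :=
          LinearMap.ext fun c => (cechMap_lsmul w u c).symm
        refine DMod.artinian_ker_of_coker u (cechMap w (rSub u N).mkQ) (cechMap_d w _) ?_
          (cechMap_surjective w (Submodule.mkQ_surjective _)) ?_ hquot
        · rw [e]
          exact cechMap_injective w hreg
        · rw [e]
          refine cechMap_exact w fun n => ?_
          rw [Submodule.mkQ_apply, Submodule.Quotient.mk_eq_zero]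
          rfl
      refine isArtinian_of_ker u ?_ hker
      rintro ⟨_, c, hc, rfl⟩
      have hc : (cech w N).d c = 0 := hc
      -- the radical of the annihilator of a homology class contains the maximal ideal
      let J : Ideal R := (LinearMap.range (cech w N).d).comap
        (LinearMap.toSpanSingleton R (cech w N).carrier c)
      have hJ : maximalIdeal R ≤ J.radical := by
        refine hI₀.trans (Ideal.radical_le_radical_iff.2 (sup_le ?_ ?_))
        · rw [Ideal.span_le]
          rintro _ ⟨i, rfl⟩
          obtain ⟨k, e, he⟩ := cech_tor w N i c hc
          exact ⟨k, e, he⟩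
        · intro a ha
          refine Ideal.le_radical ?_
          refine ⟨0, ?_⟩
          rw [map_zero]
          exact (cech_smul_eq_zero w (hpN a (hIp (hI ha))) c).symm
      obtain ⟨k, hk⟩ := hJ hum
      refine ⟨k, Subtype.ext ?_⟩
      change u ^ k • (LinearMap.range (cech w N).d).mkQ c = 0
      rw [← map_smul, Submodule.mkQ_apply, Submodule.Quotient.mk_eq_zero]
      exact hk
end

/-! ### The torsion of top local cohomology is Artinian -/

section
variable {R : Type u} [CommRing R]

/-- The top local cohomology is a direct summand (as far as homology is concerned) of the homology
of the total Čech complex: `π` is the projection, and `Z` is the module of cycles concentrated in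
top degree. -/
theorem exists_cech_retract {t : ℕ} (w : Fin t → R) (M : Type u) [AddCommGroup M] [Module R M] :
    ∃ (A : Type u) (_ : AddCommGroup A) (_ : Module R A) (φ : ℕ → M →ₗ[R] A)
      (π : (cech w M).carrier →ₗ[R] A) (Z : Submodule R (cech w M).carrier),
      IsTopLC w φ ∧ (∀ c, π ((cech w M).d c) = 0) ∧ (∀ c ∈ Z, (cech w M).d c = 0) ∧
      (∀ a, ∃ c ∈ Z, π c = a) ∧ (∀ c ∈ Z, π c = 0 → ∃ e, (cech w M).d e = c) := by
  induction t with
  | zero =>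
    refine ⟨M, _, _, _, LinearMap.id, ⊤, isTopLC_zero w, ?_, ?_, ?_, ?_⟩
    · intro c
      rfl
    · intro c _
      rfl
    · intro a
      exact ⟨a, trivial, rfl⟩
    · intro c _ hc
      exact ⟨0, (show c = 0 from hc).symm⟩
  | succ t ih =>
    obtain ⟨A, _, _, φ, π, Z, hφ, h1, h2, h3, h4⟩ := ih (Fin.tail w)
    set z := w 0 with hz
    let N := cech (Fin.tail w) M
    let π' : N.carrier × Loc z N.carrier →ₗ[R] Qz z A :=
      Submodule.mkQ _ ∘ₗ locMap z π ∘ₗ LinearMap.snd R _ _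
    have hπ' : ∀ n k m, π' (n, frac z k m) = qfrac z k (π m) := by
      intro n k m
      change Submodule.mkQ _ (locMap z π (frac z k m)) = _
      rw [locMap_frac]
      rfl
    let Z' : Submodule R (N.carrier × Loc z N.carrier) :=
      Submodule.prod ⊥ (LinearMap.range (locMap z Z.subtype))
    have hZ' : ∀ c ∈ Z', ∃ k, ∃ m ∈ Z, c = (0, frac z k m) := by
      rintro ⟨n, ν⟩ ⟨hn, hν⟩
      obtain ⟨ν', rfl⟩ := hν
      obtain ⟨k, m, rfl⟩ := frac_surj z ν'
      refine ⟨k, m, m.2, ?_⟩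
      rw [locMap_frac]
      exact Prod.ext hn rfl
    have hcons : IsTopLC w (fun n => qfrac z n ∘ₗ φ n) := by
      have := hφ.cons z
      rwa [hz, Fin.cons_self_tail] at this
    refine ⟨Qz z A, _, _, fun n => qfrac z n ∘ₗ φ n, π', Z', hcons, ?_, ?_, ?_, ?_⟩
    · rintro ⟨n, ν⟩
      obtain ⟨k, m, rfl⟩ := frac_surj z ν
      change π' (N.d n, frac z 0 n - locMap z N.d (frac z k m)) = 0
      have e : ((N.d n, frac z 0 n - locMap z N.d (frac z k m)) : N.carrier × Loc z N.carrier) =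
          (N.d n, frac z 0 n) - (0, frac z k (N.d m)) := by simp
      rw [e, map_sub, hπ', hπ', h1, map_zero, sub_zero, qfrac_eq_zero]
      exact ⟨0, π n, by simp⟩
    · intro c hc
      obtain ⟨k, m, hm, rfl⟩ := hZ' c hc
      change (N.d 0, frac z 0 0 - locMap z N.d (frac z k m)) = 0
      rw [locMap_frac, h2 m hm]
      simp
    · intro a
      obtain ⟨k, b, rfl⟩ := qfrac_surj z a
      obtain ⟨c, hc, rfl⟩ := h3 b
      refine ⟨(0, frac z k c), ⟨rfl, frac z k ⟨c, hc⟩, ?_⟩, hπ' 0 k c⟩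
      rw [locMap_frac]
      rfl
    · intro c hc h0
      obtain ⟨k, m, hm, rfl⟩ := hZ' c hc
      have h0 : π' (0, frac z k m) = 0 := h0
      rw [hπ', qfrac_eq_zero] at h0
      obtain ⟨i, a, ha⟩ := h0
      obtain ⟨m', hm', rfl⟩ := h3 a
      obtain ⟨e, he⟩ := h4 (z ^ i • m - z ^ (i + k) • m')
        (Z.sub_mem (Z.smul_mem _ hm) (Z.smul_mem _ hm')) (by simp [ha])
      refine ⟨((m', - frac z (k + i) e) : N.carrier × Loc z N.carrier), ?_⟩
      change (N.d m', frac z 0 m' - locMap z N.d (- frac z (k + i) e)) = (0, frac z k m)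
      refine Prod.ext (h2 _ hm') ?_
      change frac z 0 m' - locMap z N.d (- frac z (k + i) e) = frac z k m
      rw [map_neg, locMap_frac, he, map_sub, frac_steps, ← frac_steps z 0 (k + i) m', zero_add,
        add_comm i k]
      abel

/-- If the elements `w, z` generate the maximal ideal up to radical modulo the annihilator of the
finitely generated module `M`, then the `z`-torsion of the top local cohomology of `M` with respect
to `w` is Artinian, being a quotient of a local cohomology module with respect to `w, z`. -/
theorem IsTopLC.isArtinian_tors [IsNoetherianRing R] [IsLocalRing R] {t : ℕ} {w : Fin t → R}
    {z : R} (hw : ∀ i, w i ∈ maximalIdeal R) (hz : z ∈ maximalIdeal R) {M : Type u}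
    [AddCommGroup M] [Module R M] [Module.Finite R M]
    (hrad : maximalIdeal R ≤ (Ideal.span (Set.range (Fin.cons z w : Fin (t + 1) → R)) ⊔
      Module.annihilator R M).radical) {L : Type u} [AddCommGroup L] [Module R L]
    {ψ : ℕ → M →ₗ[R] L} (hψ : IsTopLC w ψ) : IsArtinian R (tors z L) := by
  obtain ⟨A, _, _, φ, π, Z, hφ, h1, h2, h3, h4⟩ := exists_cech_retract w M
  let v : Fin (t + 1) → R := Fin.cons z w
  have hv : ∀ i, v i ∈ maximalIdeal R := by
    intro i
    refine Fin.cases ?_ (fun i => ?_) i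
    · exact hz
    · exact hw i
  have hart : IsArtinian R (cech v M).Hm := cech_artinian v hv (Module.annihilator R M) hrad M
    (fun a ha m => Module.mem_annihilator.1 ha m)
  let N := cech w M
  let g : ((N.cone z).carrier ⧸ LinearMap.range (N.cone z).d) →ₗ[R] A :=
    Submodule.liftQ _ (π ∘ₗ LinearMap.fst R N.carrier (Loc z N.carrier)) (by
      rintro _ ⟨⟨n, ν⟩, rfl⟩
      exact h1 n)
  have hart' : IsArtinian R ((N.cone z).Hm) := hart
  have himg : IsArtinian R (LinearMap.range (g ∘ₗ (N.cone z).Hm.subtype)) :=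
    isArtinian_of_surjective _ (LinearMap.rangeRestrict _) (LinearMap.surjective_rangeRestrict _)
  obtain ⟨f, hf⟩ := hψ.exists_equiv hφ
  refine isArtinian_of_injective ((f.toLinearMap ∘ₗ (tors z L).subtype).codRestrict
    (LinearMap.range (g ∘ₗ (N.cone z).Hm.subtype)) ?_) ?_
  · rintro ⟨l, k, hk⟩
    change f l ∈ _
    obtain ⟨n, hn, hnl⟩ := h3 (f l)
    obtain ⟨e, he⟩ := h4 (z ^ k • n) (Z.smul_mem _ hn) (by
      rw [map_smul, hnl, ← map_smul, hk, map_zero])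
    have hcyc : (N.cone z).d ((n, frac z k e) : N.carrier × Loc z N.carrier) = 0 := by
      rw [DMod.cone_d]
      refine Prod.ext (h2 n hn) ?_
      change frac z 0 n - locMap z N.d (frac z k e) = 0
      rw [locMap_frac, he, ← frac_steps z 0 k n, zero_add, sub_self]
    exact ⟨⟨_, DMod.mk_mem_Hm hcyc⟩, hnl⟩
  · intro a b hab
    have e := congrArg Subtype.val hab
    exact Subtype.ext (f.injective e)
end

/-! ### Divisible submodules of top local cohomology -/

section
variable {R : Type u} [CommRing R]

/-- After localizing at a minimal prime `P` of `I`, some power of `P` is contained in `I`; this is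
the statement with the denominator cleared. -/
theorem exists_mul_pow_mem_of_mem_minimalPrimes [IsNoetherianRing R] {I P : Ideal R}
    (hP : P ∈ I.minimalPrimes) : ∃ c ∉ P, ∃ n, ∀ r ∈ P ^ n, c * r ∈ I := by
  classical
  have hprime : P.IsPrime := hP.1.1
  have h1 := IsLocalization.AtPrime.radical_map_of_mem_minimalPrimes (Localization.AtPrime P) P I hP
  obtain ⟨n, hn⟩ := Ideal.exists_pow_le_of_le_radical_of_fg h1.ge (IsNoetherian.noetherian _)
  rw [← Ideal.map_pow] at hn
  have h2 : ∀ r ∈ P ^ n, ∃ c ∉ P, c * r ∈ I := by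
    intro r hr
    have := hn (Ideal.mem_map_of_mem _ hr)
    rw [IsLocalization.algebraMap_mem_map_algebraMap_iff P.primeCompl] at this
    obtain ⟨c, hc, h⟩ := this
    exact ⟨c, hc, h⟩
  choose! c hc hcI using h2
  obtain ⟨S, hS⟩ : (P ^ n).FG := IsNoetherian.noetherian _
  refine ⟨∏ r ∈ S, c r, ?_, n, ?_⟩
  · intro h
    obtain ⟨r, hr, hrP⟩ := (hprime.prod_mem_iff).1 h
    exact hc r (hS ▸ Ideal.subset_span hr) hrP
  · intro r hr
    have hle : P ^ n ≤ Submodule.comap (LinearMap.mulLeft R (∏ r ∈ S, c r)) I := by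
      rw [← hS]
      refine Ideal.span_le.2 fun s hs => ?_
      change (∏ r ∈ S, c r) * s ∈ I
      rw [← Finset.mul_prod_erase S c hs]
      have := I.mul_mem_left (∏ r ∈ S.erase s, c r) (hcI s (hS ▸ Ideal.subset_span hs))
      convert! this using 1
      ring
    exact hle hr

/-- If the maximal ideal is the radical of `I + (a)`, then a prime above `I` avoiding `a` is
minimal over `I`, by the principal ideal theorem. -/
theorem mem_minimalPrimes_of_radical [IsNoetherianRing R] [IsLocalRing R] {I P : Ideal R}
    [P.IsPrime] (hIP : I ≤ P) {a : R} (ha : a ∈ maximalIdeal R) (haP : a ∉ P)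
    (hrad : maximalIdeal R ≤ (Ideal.span {a} ⊔ I).radical) : P ∈ I.minimalPrimes := by
  obtain ⟨Q, hQ, hQP⟩ := Ideal.exists_minimalPrimes_le hIP
  rcases eq_or_lt_of_le hQP with rfl | hlt
  · exact hQ
  exfalso
  have hQp : Q.IsPrime := hQ.1.1
  have hPm : P < maximalIdeal R :=
    lt_of_le_of_ne (le_maximalIdeal (Ideal.IsPrime.ne_top ‹_›)) fun h => haP (h ▸ ha)
  have hmin : maximalIdeal R ∈ (Q ⊔ Ideal.span {a}).minimalPrimes := by
    refine ⟨⟨inferInstance, sup_le (le_maximalIdeal hQp.ne_top) ?_⟩, ?_⟩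
    · rwa [Ideal.span_singleton_le_iff_mem]
    · rintro p ⟨hp, hle⟩ -
      refine hrad.trans (hp.radical_le_iff.2 (sup_le (le_sup_right.trans hle) ?_))
      exact hQ.1.2.trans (le_sup_left.trans hle)
  have hht := Ideal.map_height_le_one_of_mem_minimalPrimes hmin
  let f := Ideal.Quotient.mk Q
  have hf : Function.Surjective f := Ideal.Quotient.mk_surjective
  have hker : RingHom.ker f = Q := Ideal.mk_ker
  have hlt' : ∀ A B : Ideal R, Q ≤ A → Q ≤ B → A < B → A.map f < B.map f := by
    intro A B hA hB hAB
    refine lt_of_le_of_ne (Ideal.map_mono hAB.le) fun h => hAB.ne ?_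
    have := congrArg (Ideal.comap f) h
    rwa [Ideal.comap_map_of_surjective' f hf, Ideal.comap_map_of_surjective' f hf, hker,
      sup_eq_left.2 hA, sup_eq_left.2 hB] at this
  have p1 : (Q.map f).IsPrime := Ideal.map_isPrime_of_surjective hf hker.le
  have p2 : (P.map f).IsPrime := Ideal.map_isPrime_of_surjective hf (hker.le.trans hQP)
  have p3 : ((maximalIdeal R).map f).IsPrime :=
    Ideal.map_isPrime_of_surjective hf (hker.le.trans (hQP.trans hPm.le))
  have h1 := Ideal.height_add_one_le_of_lt_of_isPrime (hlt' Q P le_rfl hQP hlt)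
  have h2 := Ideal.height_add_one_le_of_lt_of_isPrime (hlt' P _ hQP (hQP.trans hPm.le) hPm)
  have h3 : (1 : ℕ∞) + 1 ≤ 1 := by
    calc (1 : ℕ∞) + 1 ≤ ((Q.map f).height + 1) + 1 := by gcongr; simp
      _ ≤ (P.map f).height + 1 := by gcongr
      _ ≤ _ := h2
      _ ≤ 1 := hht
  exact absurd h3 (by decide)

/-- Krull's intersection theorem at the prime `p`. -/
theorem exists_forall_smul_notMem_rSub [IsNoetherianRing R] {M : Type u} [AddCommGroup M]
    [Module R M] [Module.Finite R M] (p : Ideal R) [p.IsPrime] {z : R} (hz : z ∈ p) (v : M)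
    (hv : ∀ s ∉ p, s • v ≠ 0) : ∃ j : ℕ, ∀ s ∉ p, s • v ∉ rSub (z ^ j) M := by
  by_contra! hcon
  let A := Localization.AtPrime p
  let Mp := LocalizedModule p.primeCompl M
  let I : Ideal A := Ideal.span {algebraMap R A z}
  have hI : I ≠ ⊤ := by
    intro h
    have h1 : I ≤ maximalIdeal A := by
      rw [Ideal.span_singleton_le_iff_mem]
      exact (IsLocalization.AtPrime.to_map_mem_maximal_iff A p z).2 hz
    exact (maximalIdeal.isMaximal A).ne_top (top_le_iff.1 (h ▸ h1))
  have hk := Ideal.iInf_pow_smul_eq_bot_of_isLocalRing (M := Mp) I hI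
  have hmem : LocalizedModule.mkLinearMap p.primeCompl M v ∈
      (⨅ i : ℕ, I ^ i • ⊤ : Submodule A Mp) := by
    rw [Submodule.mem_iInf]
    intro i
    obtain ⟨s, hs, m, hm⟩ := hcon i
    have e : LocalizedModule.mkLinearMap p.primeCompl M v =
        (algebraMap R A z) ^ i • LocalizedModule.mk m (⟨s, hs⟩ : p.primeCompl) := by
      rw [← map_pow, algebraMap_smul]
      have hm : z ^ i • m = s • v := hm
      change LocalizedModule.mk v 1 = _
      rw [LocalizedModule.smul'_mk, hm, LocalizedModule.mk_eq]
      exact ⟨1, by simp [Submonoid.smul_def]⟩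
    rw [e]
    exact Submodule.smul_mem_smul (Ideal.pow_mem_pow (Ideal.mem_span_singleton_self _) i) trivial
  rw [hk, Submodule.mem_bot] at hmem
  rw [IsLocalizedModule.eq_zero_iff p.primeCompl] at hmem
  obtain ⟨s, hs⟩ := hmem
  exact hv s s.2 hs

/-- One-dimensional case: in `M_a / M` the classes `[m / aᵏ]` span an `a`-divisible submodule. -/
theorem exists_divisible_base [IsNoetherianRing R] [IsLocalRing R] {M : Type u} [AddCommGroup M]
    [Module R M] [Module.Finite R M] {a b : R} {P : Ideal R} [P.IsPrime]
    (ha : a ∈ maximalIdeal R) (haP : a ∉ P)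
    (hrad : maximalIdeal R ≤ (Ideal.span {a} ⊔ Module.annihilator R M).radical)
    (hm : ∃ m : M, ∀ s ∉ P, s • b • m ≠ 0) :
    ∃ D : Submodule R (Qz a M), (∀ d ∈ D, ∃ d' ∈ D, a • d' = d) ∧
      (∃ n, ∀ r ∈ P ^ n, ∀ d ∈ D, r • d = 0) ∧ ∃ d ∈ D, b • d ≠ 0 := by
  obtain ⟨m, hm⟩ := hm
  have hann : Module.annihilator R M ≤ P := by
    intro r hr
    by_contra hrP
    exact hm r hrP (Module.mem_annihilator.1 hr _)
  obtain ⟨c, hcP, n, hcn⟩ := exists_mul_pow_mem_of_mem_minimalPrimes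
    (mem_minimalPrimes_of_radical hann ha haP hrad)
  have hdiv : ∀ {N : Type u} [AddCommGroup N] [Module R N] (g : ℕ → N),
      (∀ k, a • g (k + 1) = g k) → ∀ d ∈ Submodule.span R (Set.range g),
      ∃ d' ∈ Submodule.span R (Set.range g), a • d' = d := by
    intro N _ _ g hg d hd
    have : Submodule.span R (Set.range g) ≤
        (Submodule.span R (Set.range g)).map (LinearMap.lsmul R N a) := by
      rw [Submodule.span_le]
      rintro _ ⟨k, rfl⟩
      exact ⟨g (k + 1), Submodule.subset_span ⟨k + 1, rfl⟩, hg k⟩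
    obtain ⟨d', hd', e⟩ := this hd
    exact ⟨d', hd', e⟩
  refine ⟨Submodule.span R (Set.range fun k => qfrac a k (c • m)), hdiv _ ?_, ⟨n, ?_⟩, ?_⟩
  · intro k
    rw [← map_smul]
    simpa using qfrac_steps a k 1 (c • m)
  · intro r hr d hd
    have : Submodule.span R (Set.range fun k => qfrac a k (c • m)) ≤
        LinearMap.ker (LinearMap.lsmul R (Qz a M) r) := by
      rw [Submodule.span_le]
      rintro _ ⟨k, rfl⟩
      change r • qfrac a k (c • m) = 0
      rw [← map_smul, smul_smul, mul_comm, Module.mem_annihilator.1 (hcn r hr), map_zero]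
    exact this hd
  · by_contra! hcon
    let T := Submodule.span R (Set.range fun k => frac a k (b • c • m))
    have hTle : T ≤ LinearMap.range (frac a 0 : M →ₗ[R] Loc a M) := by
      rw [Submodule.span_le]
      rintro _ ⟨k, rfl⟩
      have := hcon _ (Submodule.subset_span ⟨k, rfl⟩)
      rw [← map_smul] at this
      exact (Submodule.Quotient.mk_eq_zero _).1 this
    have hnoeth : IsNoetherian R (LinearMap.range (frac a 0 : M →ₗ[R] Loc a M)) := inferInstance
    have hfg : T.FG := by
      have := isNoetherian_of_injective (Submodule.inclusion hTle)
        (Submodule.inclusion_injective hTle)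
      exact Module.Finite.iff_fg.1 inferInstance
    have hT : T = ⊥ := by
      refine Submodule.eq_bot_of_le_smul_of_le_jacobson_bot (Ideal.span {a}) T hfg ?_ ?_
      · intro d hd
        obtain ⟨d', hd', rfl⟩ := hdiv _ (fun k => by
          rw [← map_smul]; simpa using frac_steps a k 1 (b • c • m)) d hd
        exact Submodule.smul_mem_smul (Ideal.mem_span_singleton_self a) hd'
      · rw [Ideal.span_singleton_le_iff_mem]
        exact maximalIdeal_le_jacobson _ ha
    have h0 : frac a 0 (b • c • m) ∈ T := Submodule.subset_span ⟨0, rfl⟩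
    rw [hT, Submodule.mem_bot, frac_eq_zero] at h0
    obtain ⟨i, hi⟩ := h0
    refine hm (a ^ i * c) ?_ ?_
    · intro h
      rcases Ideal.IsPrime.mem_or_mem ‹_› h with h | h
      · exact haP (Ideal.IsPrime.mem_of_pow_mem ‹_› i h)
      · exact hcP h
    · rw [mul_smul, smul_comm c b, hi]

/-- Along a chain of primes `p 0 ≤ ⋯ ≤ p t` and elements with `z i ∉ p i`, `z i ∈ p (i + 1)`, the
top local cohomology with respect to `z` contains a submodule that is divisible by `z t`, killed
by a power of `p t`, and not killed by `b`, provided that `b` is nonzero on `M` at `p 0`.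

In the inductive step the submodule is found in `L / zʲL`, where `L` is the top local cohomology
with respect to the remaining elements, and transported by `ℓ ↦ [ℓ / zʲ]`; the kernel of that map
is controlled by the `z`-torsion of `L`, which is Artinian. -/
theorem exists_divisible [IsNoetherianRing R] [IsLocalRing R] {t : ℕ} (p : Fin (t + 1) → Ideal R)
    (hp : ∀ i, (p i).IsPrime) (hmono : ∀ i : Fin t, p i.castSucc ≤ p i.succ)
    (z : Fin (t + 1) → R) (hzm : ∀ i, z i ∈ maximalIdeal R) (hz1 : ∀ i, z i ∉ p i)
    (hz2 : ∀ i : Fin t, z i.castSucc ∈ p i.succ) {M : Type u} [AddCommGroup M]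
    [Module R M] [Module.Finite R M] (b : R)
    (hrad : maximalIdeal R ≤ (Ideal.span (Set.range z) ⊔ Module.annihilator R M).radical)
    (hm : ∃ m : M, ∀ s ∉ p 0, s • b • m ≠ 0) {H : Type u} [AddCommGroup H] [Module R H]
    {φ : ℕ → M →ₗ[R] H} (hφ : IsTopLC z φ) :
    ∃ D : Submodule R H, (∀ d ∈ D, ∃ d' ∈ D, z (Fin.last t) • d' = d) ∧
      (∃ n, ∀ r ∈ p (Fin.last t) ^ n, ∀ d ∈ D, r • d = 0) ∧ ∃ d ∈ D, b • d ≠ 0 := by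
  -- transport of divisible submodules along linear maps
  have push : ∀ {X Y : Type u} [AddCommGroup X] [Module R X] [AddCommGroup Y] [Module R Y]
      (g : X →ₗ[R] Y) (a : R) (P : Ideal R) (D : Submodule R X),
      (∀ d ∈ D, ∃ d' ∈ D, a • d' = d) → (∃ n, ∀ r ∈ P ^ n, ∀ d ∈ D, r • d = 0) →
      (∀ d ∈ D.map g, ∃ d' ∈ D.map g, a • d' = d) ∧
      (∃ n, ∀ r ∈ P ^ n, ∀ d ∈ D.map g, r • d = 0) := by
    intro X Y _ _ _ _ g a P D h1 h2
    constructor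
    · rintro _ ⟨d, hd, rfl⟩
      obtain ⟨d', hd', rfl⟩ := h1 d hd
      exact ⟨g d', ⟨d', hd', rfl⟩, (map_smul g a d').symm⟩
    · obtain ⟨n, hn⟩ := h2
      refine ⟨n, ?_⟩
      rintro r hr _ ⟨d, hd, rfl⟩
      rw [← map_smul, hn r hr d hd, map_zero]
  induction t generalizing M H b with
  | zero =>
    have hp0 := hp 0
    obtain ⟨D, h1, h2, d, hd, hd0⟩ := exists_divisible_base (M := M) (a := z 0) (b := b) (P := p 0)
      (hzm 0) (hz1 0) (by
        have : Set.range z = {z 0} := by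
          ext r
          simp [Fin.exists_fin_one, eq_comm]
        rwa [this] at hrad) hm
    have hcons := (isTopLC_zero (M := M) (Fin.tail z)).cons (z 0)
    rw [Fin.cons_self_tail] at hcons
    obtain ⟨f, hf⟩ := hcons.exists_equiv hφ
    obtain ⟨h1', h2'⟩ := push f.toLinearMap (z 0) (p 0) D h1 h2
    refine ⟨D.map f.toLinearMap, h1', h2', f d, ⟨d, hd, rfl⟩, ?_⟩
    rw [← map_smul]
    exact fun h => hd0 ((map_eq_zero_iff f f.injective).1 h)
  | succ t ih =>
    obtain ⟨m, hm⟩ := hm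
    have hprime0 := hp 0
    have hprime1 := hp 1
    set z0 := z 0 with hz0
    set w := Fin.tail z with hwdef
    have hzw : z = Fin.cons z0 w := (Fin.cons_self_tail z).symm
    have hwm : ∀ i, w i ∈ maximalIdeal R := fun i => hzm i.succ
    let M1 := M ⧸ tors z0 M
    have hannM1 : Module.annihilator R M ≤ Module.annihilator R M1 :=
      (tors z0 M).mkQ.annihilator_le_of_surjective (Submodule.mkQ_surjective _)
    obtain ⟨L, _, _, ψ, hψ⟩ := exists_isTopLC w M1
    have hart : IsArtinian R (tors z0 L) := by
      refine hψ.isArtinian_tors hwm (hzm 0) ?_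
      rw [← hzw]
      exact hrad.trans (Ideal.radical_mono (sup_le_sup_left hannM1 _))
    obtain ⟨e, he⟩ : ∃ e : ℕ, ∀ c ∈ tors z0 L, ∀ k, ∃ l : L, z0 ^ (e + k) • l = z0 ^ e • c := by
      let f : Module.End R (tors z0 L) := LinearMap.lsmul R _ z0
      have hf : ∀ n c, (f ^ n) c = z0 ^ n • c := by
        intro n
        induction n with
        | zero => simp
        | succ n ihn =>
          intro c
          rw [pow_succ, Module.End.mul_apply, ihn, pow_succ, mul_smul]
          rfl
      obtain ⟨e, he⟩ := Filter.eventually_atTop.1 f.eventually_iInf_range_pow_eq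
      refine ⟨e, fun c hc k => ?_⟩
      have h1 : (f ^ e) ⟨c, hc⟩ ∈ LinearMap.range (f ^ (e + k)) := by
        rw [← he (e + k) (Nat.le_add_right _ _), he e le_rfl]
        exact ⟨_, rfl⟩
      obtain ⟨l, hl⟩ := h1
      rw [hf, hf] at hl
      exact ⟨l, congrArg Subtype.val hl⟩
    let m1 : M1 := (tors z0 M).mkQ m
    have hv : ∀ s ∉ p 1, s • (b * z0 ^ e) • m1 ≠ 0 := by
      intro s hs h0
      rw [← map_smul, ← map_smul, Submodule.mkQ_apply, Submodule.Quotient.mk_eq_zero] at h0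
      obtain ⟨i, hi⟩ := h0
      refine hm (z0 ^ i * s * z0 ^ e) ?_ ?_
      · intro h
        have hz0p : z0 ∉ p 0 := hz1 0
        rcases hprime0.mem_or_mem h with h | h
        · rcases hprime0.mem_or_mem h with h | h
          · exact hz0p (hprime0.mem_of_pow_mem i h)
          · exact hs (hmono 0 h)
        · exact hz0p (hprime0.mem_of_pow_mem e h)
      · rw [← hi]
        module
    obtain ⟨j, hj⟩ := exists_forall_smul_notMem_rSub (p 1) (hz2 0) _ hv
    have hrad' : maximalIdeal R ≤ (Ideal.span (Set.range w) ⊔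
        Module.annihilator R (M1 ⧸ rSub (z0 ^ j) M1)).radical := by
      have hann2 : Module.annihilator R M1 ≤ Module.annihilator R (M1 ⧸ rSub (z0 ^ j) M1) :=
        (rSub (z0 ^ j) M1).mkQ.annihilator_le_of_surjective (Submodule.mkQ_surjective _)
      have hzann : z0 ^ j ∈ Module.annihilator R (M1 ⧸ rSub (z0 ^ j) M1) := by
        rw [Module.mem_annihilator]
        intro x
        obtain ⟨x, rfl⟩ := Submodule.mkQ_surjective _ x
        rw [← map_smul, Submodule.mkQ_apply, Submodule.Quotient.mk_eq_zero]
        exact ⟨x, rfl⟩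
      refine hrad.trans (Ideal.radical_le_radical_iff.2 (sup_le ?_ ?_))
      · rw [Ideal.span_le]
        rintro _ ⟨i, rfl⟩
        refine Fin.cases ?_ (fun i => ?_) i
        · exact ⟨j, Ideal.mem_sup_right hzann⟩
        · exact Ideal.le_radical (Ideal.mem_sup_left (Ideal.subset_span ⟨i, rfl⟩))
      · exact (hannM1.trans hann2).trans (le_sup_right.trans Ideal.le_radical)
    obtain ⟨D', h1, h2, d', hd', hd0⟩ := ih (Fin.tail p) (fun i => hp i.succ)
      (fun i => hmono i.succ) w hwm (fun i => hz1 i.succ) (fun i => hz2 i.succ) (b * z0 ^ e)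
      hrad' ⟨(rSub (z0 ^ j) M1).mkQ m1, by
        intro s hs h0
        rw [← map_smul, ← map_smul, Submodule.mkQ_apply, Submodule.Quotient.mk_eq_zero] at h0
        exact hj s hs h0⟩ (hψ.quot (z0 ^ j))
    let g : (L ⧸ rSub (z0 ^ j) L) →ₗ[R] Qz z0 L := Submodule.liftQ _ (qfrac z0 j) (by
      rintro _ ⟨l, rfl⟩
      exact (qfrac_eq_zero z0 j _).2 ⟨0, l, by simp⟩)
    have hcons := (hψ.cons z0).of_quot_tors
    rw [← hzw] at hcons
    obtain ⟨f, hf⟩ := hcons.exists_equiv hφ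
    obtain ⟨h1', h2'⟩ := push (f.toLinearMap ∘ₗ g) (z (Fin.last (t + 1)))
      (p (Fin.last (t + 1))) D' h1 h2
    refine ⟨D'.map (f.toLinearMap ∘ₗ g), h1', h2', f (g d'), ⟨d', hd', rfl⟩, ?_⟩
    intro h0
    rw [← map_smul, map_eq_zero_iff f f.injective] at h0
    obtain ⟨l, rfl⟩ := Submodule.mkQ_surjective _ d'
    have h0 : b • qfrac z0 j l = 0 := h0
    rw [← map_smul, qfrac_eq_zero] at h0
    obtain ⟨i, l', hl'⟩ := h0
    obtain ⟨l'', hl''⟩ := he (b • l - z0 ^ j • l') ⟨i, by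
      rw [smul_sub, hl', smul_smul, ← pow_add, sub_self]⟩ j
    apply hd0
    rw [← map_smul, Submodule.mkQ_apply, Submodule.Quotient.mk_eq_zero]
    refine ⟨z0 ^ e • l'' + z0 ^ e • l', ?_⟩
    change z0 ^ j • (z0 ^ e • l'' + z0 ^ e • l') = (b * z0 ^ e) • l
    have : z0 ^ j • z0 ^ e • l'' = z0 ^ e • (b • l - z0 ^ j • l') := by
      rw [← hl'']
      module
    rw [smul_add, this]
    module
end

/-! ### Systems of parameters adapted to a chain of primes -/

section Parameters

variable {S : Type u} [CommRing S]

theorem le_height_of_chain {t : ℕ} (p : ℕ → Ideal S) (hp : ∀ i ≤ t, (p i).IsPrime)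
    (hlt : ∀ i < t, p i < p (i + 1)) : ∀ k ≤ t, (k : ℕ∞) ≤ (p k).height := by
  intro k
  induction k with
  | zero => simp
  | succ k ih =>
    intro hk
    have := hp k (by omega)
    have := hp (k + 1) hk
    have h1 := Ideal.height_add_one_le_of_lt_of_isPrime (hlt k hk)
    push_cast
    exact (add_le_add_left (ih (by omega)) 1).trans h1

variable [IsNoetherianRing S]

/-- Prime avoidance along a chain `p 0 < p 1 < ⋯`: one can choose `z i ∈ p (i + 1) \ p i` so that
each new element raises the height. -/
theorem exists_avoiding {t : ℕ} (p : ℕ → Ideal S) (hp : ∀ i ≤ t, (p i).IsPrime)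
    (hlt : ∀ i < t, p i < p (i + 1)) : ∀ k ≤ t, ∃ z : ℕ → S,
      (∀ i < k, z i ∉ p i ∧ z i ∈ p (i + 1)) ∧
      ∀ q : Ideal S, q.IsPrime → (∀ i < k, z i ∈ q) → (k : ℕ∞) ≤ q.height := by
  classical
  intro k
  induction k with
  | zero => exact fun _ => ⟨0, by simp, by simp⟩
  | succ k ih =>
    intro hk
    obtain ⟨z, hz, hq⟩ := ih (by omega)
    set J : Ideal S := Ideal.span (z '' {i | i < k}) with hJ
    have hfin : J.minimalPrimes.Finite := Ideal.finite_minimalPrimes_of_isNoetherianRing S J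
    let B : Finset (Ideal S) :=
      insert (p k) (hfin.toFinset.filter fun q => q.height < ((k + 1 : ℕ) : ℕ∞))
    have hB : ¬ ((p (k + 1) : Ideal S) : Set S) ⊆ ⋃ q ∈ (B : Set (Ideal S)), (q : Set S) := by
      intro hsub
      refine (?_ : ¬ ∃ q ∈ B, p (k + 1) ≤ id q)
        ((Ideal.subset_union_prime (f := id) (p k) (p k) ?_).1 hsub)
      · rintro ⟨q, hqB, hle⟩
        rcases Finset.mem_insert.1 hqB with rfl | hqB
        · exact absurd hle (not_le_of_gt (hlt k hk))
        · have h1 := (Finset.mem_filter.1 hqB).2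
          have h2 := le_height_of_chain p hp hlt (k + 1) hk
          exact absurd (h2.trans (Ideal.height_mono hle)) (not_le_of_gt h1)
      · intro q hqB hne _
        rcases Finset.mem_insert.1 hqB with rfl | hqB
        · exact absurd rfl hne
        · exact (hfin.mem_toFinset.1 (Finset.mem_filter.1 hqB).1).1.1
    obtain ⟨w, hw, hwB⟩ := Set.not_subset.1 hB
    have hwB' : ∀ q ∈ B, w ∉ q := by
      intro q hqB hwq
      exact hwB (Set.mem_biUnion hqB hwq)
    refine ⟨Function.update z k w, ?_, ?_⟩
    · intro i hi
      by_cases hik : i = k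
      · subst hik
        simpa using ⟨hwB' _ (Finset.mem_insert_self _ _), hw⟩
      · simpa [hik] using hz i (by omega)
    · intro q hqp hzq
      have hJq : J ≤ q := by
        rw [hJ, Ideal.span_le]
        rintro _ ⟨i, hi, rfl⟩
        have hi : i < k := hi
        have := hzq i (by omega)
        rwa [Function.update_of_ne (by omega)] at this
      have hwq : w ∈ q := by simpa using hzq k (by omega)
      obtain ⟨q', hq', hle⟩ := Ideal.exists_minimalPrimes_le hJq
      have := hq'.1.1
      by_cases hht : q'.height < ((k + 1 : ℕ) : ℕ∞)
      · have hwq' : w ∉ q' := hwB' q' (Finset.mem_insert_of_mem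
          (Finset.mem_filter.2 ⟨hfin.mem_toFinset.2 hq', hht⟩))
        have hlt' : q' < q := lt_of_le_of_ne hle fun h => hwq' (h ▸ hwq)
        have h1 := Ideal.height_add_one_le_of_lt_of_isPrime hlt'
        have h2 := hq q' hq'.1.1 fun i hi => hq'.1.2 (Ideal.subset_span ⟨i, hi, rfl⟩)
        push_cast
        exact (add_le_add_left h2 1).trans h1
      · exact (not_lt.1 hht).trans (Ideal.height_mono hle)

/-- A strict chain of primes of length `t ≥ dim S` ending at the maximal ideal is refined by a
system of parameters `z` with `z i ∈ p (i + 1) \ p i`. -/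
theorem exists_parameters [IsLocalRing S] {t : ℕ} (hdim : ringKrullDim S ≤ t)
    (p : ℕ → Ideal S) (hp : ∀ i ≤ t, (p i).IsPrime) (hlt : ∀ i < t, p i < p (i + 1)) :
    ∃ z : Fin t → S, (∀ i : Fin t, z i ∉ p i) ∧ (∀ i : Fin t, z i ∈ p (i + 1)) ∧
      maximalIdeal S ≤ (Ideal.span (Set.range z)).radical := by
  obtain ⟨z, hz, hq⟩ := exists_avoiding p hp hlt t le_rfl
  refine ⟨fun i => z i, fun i => (hz i i.2).1, fun i => (hz i i.2).2, ?_⟩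
  rw [Ideal.radical_eq_sInf]
  refine le_sInf fun q hq' => ?_
  obtain ⟨hle, hqp⟩ := hq'
  have h1 := hq q hqp fun i hi => hle (Ideal.subset_span ⟨⟨i, hi⟩, rfl⟩)
  by_contra hne
  have hlt' : q < maximalIdeal S :=
    lt_of_le_of_ne (le_maximalIdeal hqp.ne_top) fun h => hne h.ge
  have h2 := Ideal.height_add_one_le_of_lt_of_isPrime hlt'
  rw [← maximalIdeal_height_eq_ringKrullDim] at hdim
  have h3 : (maximalIdeal S).height ≤ (t : ℕ∞) := by exact_mod_cast hdim
  have h4 : (t : ℕ∞) + 1 ≤ t := (add_le_add_left h1 1).trans (h2.trans h3)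
  have : t + 1 ≤ t := by exact_mod_cast h4
  omega

end Parameters

/-! ### The theorem for rings in which every prime lies on a long chain -/

section Main

variable {S : Type u} [CommRing S]

/-- A nonzero element killed by a power of the maximal ideal has a nonzero multiple in the socle. -/
theorem exists_socle_smul [IsLocalRing S] {H : Type u} [AddCommGroup H] [Module S H] (N : ℕ) (d : H)
    (hd : d ≠ 0) (hN : ∀ r ∈ maximalIdeal S ^ N, r • d = 0) :
    ∃ r : S, r • d ≠ 0 ∧ ∀ s ∈ maximalIdeal S, s • r • d = 0 := by
  induction N generalizing d with
  | zero => exact absurd (by simpa using hN 1 (by simp)) hd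
  | succ N ih =>
    by_cases h : ∀ s ∈ maximalIdeal S, s • d = 0
    · exact ⟨1, by simpa using hd, by simpa using h⟩
    · push Not at h
      obtain ⟨s, hs, hsd⟩ := h
      obtain ⟨r, hr, hr'⟩ := ih (s • d) hsd fun r hr => by
        rw [smul_smul]
        exact hN _ (by rw [pow_succ]; exact Ideal.mul_mem_mul hr hs)
      exact ⟨r * s, by rwa [mul_smul], fun s' hs' => by rw [mul_smul]; exact hr' s' hs'⟩

theorem exists_matrix_of_mem {t : ℕ} {v w : Fin t → S}
    (h : ∀ i, w i ∈ Ideal.span (Set.range v)) :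
    ∃ B : Matrix (Fin t) (Fin t) S, ∀ i, w i = ∑ j, B i j * v j := by
  have h2 : ∀ i, ∃ a : Fin t → S, ∑ j, a j * v j = w i := fun i =>
    Ideal.mem_span_range_iff_exists_fun.1 (h i)
  choose B hB using h2
  exact ⟨B, fun i => (hB i).symm⟩

/-- A submodule that is divisible by an element of the maximal ideal and killed by a power of an
ideal `P ⊇ (y)` vanishes inside a module whose submodules killed by `y` are finitely generated. -/
theorem IsSmall.eq_bot_of_divisible [IsLocalRing S] {t : ℕ} {y : Fin t → S} {H : Type u} [AddCommGroup H]
    [Module S H] (h : IsSmall y H) {P : Ideal S} (hyP : ∀ i, y i ∈ P) {a : S}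
    (ha : a ∈ maximalIdeal S) (D : Submodule S H) (hD : D ≤ Ideal.span {a} • D) (n : ℕ)
    (hn : P ^ n • D = ⊥) : D = ⊥ := by
  induction n with
  | zero => simpa using hn
  | succ n ih =>
    apply ih
    set E := P ^ n • D with hE
    have hEa : E ≤ Ideal.span {a} • E := by
      rw [hE, ← mul_smul, mul_comm, mul_smul]
      exact smul_mono_right _ hD
    have hEP : ∀ i (e : E), y i • e = 0 := by
      rintro i ⟨e, he⟩
      have h1 : y i • e ∈ P • E := Submodule.smul_mem_smul (hyP i) he
      rw [hE, ← mul_smul, ← pow_succ', hn] at h1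
      exact Subtype.ext ((Submodule.mem_bot S).1 h1)
    have hN : IsNoetherian S E :=
      (h.of_injective E.subtype E.injective_subtype).isNoetherian_of_killed hEP
    have hfg : E.FG := (isNoetherian_submodule.1 hN) E le_rfl
    refine Submodule.eq_bot_of_le_smul_of_le_jacobson_bot _ E hfg hEa ?_
    rw [Ideal.span_singleton_le_iff_mem]
    exact maximalIdeal_le_jacobson _ ha

variable [IsNoetherianRing S] [IsLocalRing S]

theorem exists_pow_le_pwIdeal {t : ℕ} {u : Fin t → S}
    (hu : maximalIdeal S ≤ (Ideal.span (Set.range u)).radical) (n : ℕ) :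
    ∃ N, maximalIdeal S ^ N ≤ pwIdeal u n := by
  refine Ideal.exists_pow_le_of_le_radical_of_fg ?_ (IsNoetherian.noetherian _)
  refine hu.trans (Ideal.radical_le_radical_iff.2 ?_)
  rw [Ideal.span_le]
  rintro _ ⟨i, rfl⟩
  exact ⟨n, Ideal.subset_span ⟨i, rfl⟩⟩

/-- The socle of the top local cohomology is finitely generated, so it already comes from a single
`S/(u₁ⁿ, …, u_tⁿ)`. -/
theorem IsTopLC.exists_socle_mem_range {t : ℕ} {u : Fin t → S} {H : Type u} [AddCommGroup H]
    [Module S H] {φ : ℕ → S →ₗ[S] H} (h : IsTopLC u φ) (hu : ∀ i, u i ∈ maximalIdeal S)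
    (hdim : ringKrullDim S ≤ t) :
    ∃ n, ∀ d : H, (∀ s ∈ maximalIdeal S, s • d = 0) → ∃ c, φ n c = d := by
  have hsmall : IsSmall u H := h.isSmall hu (by
    rwa [Module.supportDim_self_eq_ringKrullDim])
  set Z : Submodule S H := Submodule.torsionBySet S H (maximalIdeal S : Set S) with hZ
  have hmem : ∀ d, d ∈ Z ↔ ∀ s ∈ maximalIdeal S, s • d = 0 := by
    intro d
    rw [hZ, Submodule.mem_torsionBySet_iff]
    exact ⟨fun h s hs => h ⟨s, hs⟩, fun h s => h s s.2⟩
  have hN : IsNoetherian S Z := by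
    refine (hsmall.of_injective Z.subtype Z.injective_subtype).isNoetherian_of_killed ?_
    rintro i ⟨z, hz⟩
    exact Subtype.ext ((hmem z).1 hz _ (hu i))
  obtain ⟨s, hs⟩ := (isNoetherian_submodule.1 hN) Z le_rfl
  choose n c hc using h.surj
  refine ⟨s.sup n, fun d hd => ?_⟩
  have hle : Z ≤ LinearMap.range (φ (s.sup n)) := by
    rw [← hs, Submodule.span_le]
    intro d hd
    obtain ⟨k, hk⟩ := Nat.exists_eq_add_of_le (Finset.le_sup (f := n) hd)
    refine ⟨prd u ^ k • c d, ?_⟩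
    rw [hk, h.steps, hc]
  exact hle ((hmem d).2 hd)

/-- The theorem for a ring in which every nonmaximal prime lies below the last but one term of a
chain of primes of length `t`.  The bound is chosen so that the socle of the top local cohomology
comes from `S / (x)^lim`; if `y` is not a system of parameters, a divisible submodule provides a
socle element that dies in the top local cohomology along `y`. -/
theorem exists_bound_of_chains {t : ℕ} (hdim : ringKrullDim S ≤ t)
    (hch : ∀ P : Ideal S, P.IsPrime → P ≠ maximalIdeal S → ∃ p : ℕ → Ideal S,
      (∀ i ≤ t, (p i).IsPrime) ∧ (∀ i < t, p i < p (i + 1)) ∧ P ≤ p (t - 1)) :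
    ∃ ℓ : ℕ, 0 < ℓ ∧ ∀ (x y : Fin t → S) (A : Matrix (Fin t) (Fin t) S),
      (Ideal.span (Set.range x)).radical = maximalIdeal S →
      Ideal.span (Set.range x) ≤ maximalIdeal S ^ ℓ →
      (∀ i, y i = ∑ j, A i j * x j) →
      ((Ideal.span (Set.range y)).radical = maximalIdeal S ↔
        ∀ r : S, InLim y (A.det * r) → InLim x r) := by
  by_cases hex : ∃ u : Fin t → S, (Ideal.span (Set.range u)).radical = maximalIdeal S
  swap
  · exact ⟨1, one_pos, fun x y A hx => absurd ⟨x, hx⟩ hex⟩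
  obtain ⟨u, hu⟩ := hex
  have mem_of_sop : ∀ {v : Fin t → S}, (Ideal.span (Set.range v)).radical = maximalIdeal S →
      ∀ i, v i ∈ maximalIdeal S := fun hv i => hv ▸ Ideal.le_radical (Ideal.subset_span ⟨i, rfl⟩)
  obtain ⟨Hu, _, _, φu, hφu⟩ := exists_isTopLC u S
  obtain ⟨n, hsoc⟩ := hφu.exists_socle_mem_range (mem_of_sop hu) hdim
  obtain ⟨N, hN⟩ := exists_pow_le_pwIdeal hu.ge n
  refine ⟨N + 1, Nat.succ_pos _, fun x y A hx hxl hA => ?_⟩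
  obtain ⟨Hx, _, _, φx, hφx⟩ := exists_isTopLC x S
  obtain ⟨Hy, _, _, φy, hφy⟩ := exists_isTopLC y S
  have hym : ∀ i, y i ∈ maximalIdeal S := fun i => by
    rw [hA i]
    exact Ideal.sum_mem _ fun j _ => Ideal.mul_mem_left _ _ (mem_of_sop hx j)
  simp only [hφx.inLim_iff, hφy.inLim_iff]
  constructor
  · intro hy r hr
    have hxy : ∀ i, y i ∈ (Ideal.span (Set.range x)).radical := fun i => hx ▸ hym i
    obtain ⟨θ, hθ⟩ := hφx.exists_det hφy hxy
    apply hφx.det_injective hφy hxy (fun i => hy ▸ mem_of_sop hx i) hθ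
    rw [hθ 1 1 A (by simpa using hA), hr, map_zero]
  · intro hinj
    by_contra hy
    obtain _ | t := t
    · rw [Subsingleton.elim y x] at hy
      exact hy hx
    have hyle : (Ideal.span (Set.range y)).radical ≤ maximalIdeal S :=
      (maximalIdeal.isMaximal S).isPrime.radical_le_iff.2 (Ideal.span_le.2 (by
        rintro _ ⟨i, rfl⟩
        exact hym i))
    obtain ⟨P, hPp, hyP, hPm⟩ : ∃ P : Ideal S, P.IsPrime ∧ Ideal.span (Set.range y) ≤ P ∧
        P ≠ maximalIdeal S := by
      by_contra hcon
      push Not at hcon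
      apply hy
      refine le_antisymm hyle ?_
      rw [Ideal.radical_eq_sInf]
      exact le_sInf fun P hP => (hcon P hP.2 hP.1).ge
    obtain ⟨p, hpp, hplt, hPle⟩ := hch P hPp hPm
    rw [Nat.add_sub_cancel] at hPle
    obtain ⟨z, hz1, hz2, hz⟩ := exists_parameters hdim p hpp hplt
    have hzm : ∀ i, z i ∈ maximalIdeal S := fun i =>
      le_maximalIdeal (hpp (i + 1) i.2).ne_top (hz2 i)
    obtain ⟨Hz, _, _, φz, hφz⟩ := exists_isTopLC z S
    obtain ⟨D, hDdiv, ⟨e, hDe⟩, d, hd, hd0⟩ := exists_divisible (M := S)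
      (fun i : Fin (t + 1) => p i) (fun i => hpp i i.2.le)
      (fun i => (hplt i (by omega)).le) z hzm hz1 (fun i => hz2 i.castSucc) 1
      (hz.trans (Ideal.radical_mono le_sup_left))
      ⟨1, fun s hs h0 => hs (by
        have : s = 0 := by simpa using h0
        rw [this]; exact Ideal.zero_mem _)⟩ hφz
    rw [one_smul] at hd0
    have hzu : ∀ i, u i ∈ (Ideal.span (Set.range z)).radical := fun i => hz (mem_of_sop hu i)
    obtain ⟨θ, hθ⟩ := hφz.exists_det hφu hzu
    have hθinj := hφz.det_injective hφu hzu (fun i => hu ▸ hzm i) hθ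
    -- a nonzero socle element in the image of `D` in the local cohomology along `u`
    have hd1 : θ d ≠ 0 := fun h => hd0 (hθinj (by rw [h, map_zero]))
    obtain ⟨k, c0, hc0⟩ := hφu.surj (θ d)
    obtain ⟨K, hK⟩ := exists_pow_le_pwIdeal hu.ge k
    obtain ⟨s, hs0, hs⟩ := exists_socle_smul K (θ d) hd1 fun r hr => by
      rw [← hc0, ← map_smul]
      apply hφu.zero_of_mem
      rw [mem_pwSub_self]
      exact Ideal.mul_mem_right _ _ (hK hr)
    obtain ⟨c, hc⟩ := hsoc _ hs
    obtain ⟨B, hB⟩ : ∃ B : Matrix (Fin (t + 1)) (Fin (t + 1)) S,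
        ∀ i, x i = ∑ j, B i j * u j ^ n :=
      exists_matrix_of_mem (v := fun j => u j ^ n) fun i =>
        hN (Ideal.pow_le_pow_right (Nat.le_succ N) (hxl (Ideal.subset_span ⟨i, rfl⟩)))
    have hux : ∀ i, x i ∈ (Ideal.span (Set.range u)).radical := fun i => hu ▸ mem_of_sop hx i
    have huy : ∀ i, y i ∈ (Ideal.span (Set.range u)).radical := fun i => hu ▸ hym i
    obtain ⟨θx, hθx⟩ := hφu.exists_det hφx hux
    obtain ⟨θy, hθy⟩ := hφu.exists_det hφy huy
    have hθxinj := hφu.det_injective hφx hux (fun i => hx ▸ mem_of_sop hu i) hθx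
    -- the image of `D` in the local cohomology along `y` vanishes
    have hbot : D.map (θy ∘ₗ θ) = ⊥ := by
      have hsmall : IsSmall y Hy := hφy.isSmall hym (by
        rwa [Module.supportDim_self_eq_ringKrullDim])
      refine hsmall.eq_bot_of_divisible (P := p t)
        (fun i => hPle (hyP (Ideal.subset_span ⟨i, rfl⟩))) (hzm (Fin.last t)) _ ?_ e ?_
      · rw [← Submodule.map_smul'']
        refine Submodule.map_mono fun d hd => ?_
        obtain ⟨d', hd', rfl⟩ := hDdiv d hd
        exact Submodule.smul_mem_smul (Ideal.mem_span_singleton_self _) hd'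
      · rw [← Submodule.map_smul'', eq_bot_iff, Submodule.map_le_iff_le_comap,
          Submodule.smul_le]
        intro r hr d hd
        have h0 : r • d = 0 := hDe r hr d hd
        rw [h0]
        exact Submodule.zero_mem _
    have hzero : θy (s • θ d) = 0 := by
      have : (θy ∘ₗ θ) (s • d) ∈ D.map (θy ∘ₗ θ) := ⟨s • d, D.smul_mem s hd, rfl⟩
      rw [hbot, Submodule.mem_bot] at this
      simpa using this
    rw [← hc, hθy n 1 (A * B) (fun i => by
      rw [pow_one, hA]
      simp only [hB, Matrix.mul_apply, Finset.sum_mul, Finset.mul_sum, mul_assoc]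
      rw [Finset.sum_comm]), Matrix.det_mul, mul_assoc] at hzero
    have h1 := hinj _ hzero
    rw [← hθx n 1 B (by simpa using hB) c, hc] at h1
    exact hs0 (hθxinj (by rw [h1, map_zero]))

end Main

/-! ### Chains of primes modulo the unmixed component -/

section Chains

variable {R : Type u} [CommRing R]

theorem le_ringKrullDim_quotient_iff (I : Ideal R) (t : ℕ) :
    (t : WithBot ℕ∞) ≤ ringKrullDim (R ⧸ I) ↔
      ∃ l : LTSeries (PrimeSpectrum R), l.length = t ∧ I ≤ l.head.asIdeal := by
  rw [ringKrullDim_quotient, Order.le_krullDim_iff]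
  constructor
  · rintro ⟨l, hl⟩
    exact ⟨l.map Subtype.val (Subtype.strictMono_coe _), hl, l.head.2⟩
  · rintro ⟨l, hl, hle⟩
    refine ⟨⟨l.length, fun i => ⟨l i, ?_⟩, fun i => l.step i⟩, hl⟩
    exact hle.trans (l.head_le i)

/-- Every minimal prime over the unmixed component has full dimension: otherwise
`q = (U : c)` and `U + (c)` would be a larger ideal of dimension `< t`. -/
theorem le_dim_of_mem_minimalPrimes_unmixed [IsNoetherianRing R] {t : ℕ} (U : Ideal R)
    (hUdim : moduleDim R U < (t : WithBot ℕ∞))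
    (hUmax : ∀ J : Ideal R, moduleDim R J < (t : WithBot ℕ∞) → J ≤ U)
    {q : Ideal R} (hq : q ∈ U.minimalPrimes) :
    (t : WithBot ℕ∞) ≤ ringKrullDim (R ⧸ q) := by
  by_contra hlt
  have hU1 : U.colon {(1 : R)} = U := by
    ext r
    simp [Submodule.mem_colon_singleton]
  rw [← hU1] at hq
  obtain ⟨c, hc⟩ := Submodule.exists_eq_colon_of_mem_minimalPrimes hq
  have hcq : ∀ b, b ∈ q ↔ b * c ∈ U := by
    intro b
    rw [hc, Submodule.mem_colon_singleton, smul_eq_mul]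
  have hcU : c ∉ U := fun h => hq.1.1.ne_top
    ((Ideal.eq_top_iff_one _).2 ((hcq 1).2 (by simpa using h)))
  apply hcU
  refine hUmax (U ⊔ Ideal.span {c}) ?_ (Ideal.mem_sup_right (Ideal.mem_span_singleton_self c))
  rw [moduleDim] at hUdim ⊢
  by_contra hge
  rw [not_lt, le_ringKrullDim_quotient_iff] at hge
  obtain ⟨l, hl, hle⟩ := hge
  have hmul : Module.annihilator R U * q ≤ l.head.asIdeal := by
    refine le_trans (Ideal.mul_le.2 fun a ha b hb => ?_) hle
    rw [Module.mem_annihilator]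
    rintro ⟨w, hw⟩
    obtain ⟨v, hv, _, hc', rfl⟩ := Submodule.mem_sup.1 hw
    obtain ⟨e, rfl⟩ := Ideal.mem_span_singleton'.1 hc'
    have h1 : a * v = 0 := congrArg Subtype.val (Module.mem_annihilator.1 ha ⟨v, hv⟩)
    have h2 : a * (b * c) = 0 :=
      congrArg Subtype.val (Module.mem_annihilator.1 ha ⟨b * c, (hcq b).1 hb⟩)
    refine Subtype.ext ?_
    change a * b * (v + e * c) = 0
    linear_combination b * h1 + e * h2
  rcases l.head.isPrime.mul_le.1 hmul with h | h
  · exact absurd ((le_ringKrullDim_quotient_iff _ _).2 ⟨l, hl, h⟩) (not_le_of_gt hUdim)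
  · exact hlt ((le_ringKrullDim_quotient_iff _ _).2 ⟨l, hl, h⟩)

variable [IsNoetherianRing R] [IsLocalRing R]

/-- Every chain of primes refines to a saturated chain with the same end points. -/
theorem exists_saturated (s : LTSeries (PrimeSpectrum R)) :
    ∃ c : LTSeries (PrimeSpectrum R), c.head = s.head ∧ c.last = s.last ∧
      (∀ k, ∃ j, c j = s k) ∧ s.length ≤ c.length ∧
      ∀ i : Fin c.length, c i.castSucc ⋖ c i.succ := by
  have : WellFoundedLT (PrimeSpectrum R) :=
    ⟨SetRel.IsWellFounded.of_finiteDimensional {(a, b) : PrimeSpectrum R × PrimeSpectrum R | a < b}⟩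
  have : WellFoundedGT (PrimeSpectrum R) :=
    ⟨SetRel.IsWellFounded.inv_of_finiteDimensional
      {(a, b) : PrimeSpectrum R × PrimeSpectrum R | a < b}⟩
  obtain ⟨c, i, hi, h0, hl⟩ := s.exists_relSeries_covBy
  refine ⟨⟨c.length, c.toFun, fun i => (c.step i).lt⟩, ?_, ?_, ?_, ?_, fun i => c.step i⟩
  · change c 0 = s 0
    rw [← hi, Function.comp, h0]
  · change c (Fin.last _) = s (Fin.last _)
    rw [← hi, Function.comp, hl]
  · exact fun k => ⟨i k, congrFun hi k⟩
  · simpa using Fintype.card_le_of_embedding i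

/-- By catenarity, a saturated chain through `P` from a minimal prime of `U` to the maximal ideal
has length `t`, as that minimal prime has dimension `t`. -/
theorem exists_chain_of_catenary {t : ℕ} (hdim : ringKrullDim R = t) (hcat : IsCatenaryRing R)
    (U : Ideal R) (hUdim : moduleDim R U < (t : WithBot ℕ∞))
    (hUmax : ∀ J : Ideal R, moduleDim R J < (t : WithBot ℕ∞) → J ≤ U)
    (P : Ideal R) (hP : P.IsPrime) (hUP : U ≤ P) (hPm : P ≠ maximalIdeal R) :
    ∃ p : ℕ → Ideal R, (∀ i ≤ t, (p i).IsPrime) ∧ (∀ i ≤ t, U ≤ p i) ∧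
      (∀ i < t, p i < p (i + 1)) ∧ P ≤ p (t - 1) := by
  have hlen : ∀ l : LTSeries (PrimeSpectrum R), l.length ≤ t := by
    intro l
    have := Order.LTSeries.length_le_krullDim l
    change _ ≤ ringKrullDim R at this
    rw [hdim] at this
    exact_mod_cast this
  obtain ⟨q, hq, hqP⟩ := Ideal.exists_minimalPrimes_le hUP
  let q' : PrimeSpectrum R := ⟨q, hq.1.1⟩
  let P' : PrimeSpectrum R := ⟨P, hP⟩
  let m' : PrimeSpectrum R := closedPoint R
  have hlem : ∀ x : PrimeSpectrum R, x ≤ m' := fun x => le_maximalIdeal x.isPrime.ne_top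
  have hPm' : P' < m' := lt_of_le_of_ne (hlem P') fun h => hPm (congrArg PrimeSpectrum.asIdeal h)
  -- a saturated chain of length `t` from `q` to the maximal ideal
  obtain ⟨l, hl, hql⟩ := (le_ringKrullDim_quotient_iff q t).1
    (le_dim_of_mem_minimalPrimes_unmixed U hUdim hUmax hq)
  have hlhead : l.head = q' := by
    by_contra hne
    have hlt : q' < l.head := lt_of_le_of_ne hql (Ne.symm hne)
    have := hlen (l.cons q' hlt)
    rw [RelSeries.cons_length] at this
    omega
  have hllast : l.last = m' := by
    by_contra hne
    have hlt : l.last < m' := lt_of_le_of_ne (hlem _) hne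
    have := hlen (l.snoc m' hlt)
    rw [RelSeries.snoc_length] at this
    omega
  obtain ⟨l', hl'0, hl'1, -, hllen, hl'c⟩ := exists_saturated l
  have hl't : l'.length = t := le_antisymm (hlen l') (hl ▸ hllen)
  -- a saturated chain from `q` to the maximal ideal through `P`
  obtain ⟨s, hs0, hs1, k, hk⟩ : ∃ s : LTSeries (PrimeSpectrum R), s.head = q' ∧ s.last = m' ∧
      ∃ k, s k = P' := by
    rcases eq_or_lt_of_le (show q' ≤ P' from hqP) with h | h
    · have hstep : ∀ i : Fin 1, ![P', m'] i.castSucc < ![P', m'] i.succ := by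
        intro i
        fin_cases i
        exact hPm'
      exact ⟨⟨1, ![P', m'], hstep⟩, h.symm, rfl, (0 : Fin 2), rfl⟩
    · have hstep : ∀ i : Fin 2, ![q', P', m'] i.castSucc < ![q', P', m'] i.succ := by
        intro i
        fin_cases i
        · exact h
        · exact hPm'
      exact ⟨⟨2, ![q', P', m'], hstep⟩, rfl, rfl, (1 : Fin 3), rfl⟩
  obtain ⟨c, hc0, hc1, hck, -, hcc⟩ := exists_saturated s
  have hct : c.length = t := by
    rw [← hl't]
    exact hcat q' m' (hlem q') c l' (hc0.trans hs0) (hc1.trans hs1) (hl'0.trans hlhead)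
      (hl'1.trans hllast) hcc hl'c
  obtain ⟨j, hj⟩ := hck k
  rw [hk] at hj
  have hjlt : (j : ℕ) < t := by
    have h1 : j ≠ Fin.last _ := by
      rintro rfl
      exact hPm'.ne (hj.symm.trans (hc1.trans hs1))
    have := Fin.val_lt_last h1
    omega
  refine ⟨fun i => (c (Fin.ofNat (c.length + 1) i)).asIdeal, fun i _ => (c _).isPrime,
    fun i _ => ?_, fun i hi => ?_, ?_⟩
  · have h1 : q' ≤ c (Fin.ofNat (c.length + 1) i) := by
      rw [← hs0, ← hc0]
      exact c.head_le _
    exact hq.1.2.trans h1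
  · refine (c.strictMono (a := Fin.ofNat (c.length + 1) i) (b := Fin.ofNat _ (i + 1)) ?_)
    rw [Fin.lt_def]
    simp only [Fin.val_ofNat]
    rw [Nat.mod_eq_of_lt (by omega), Nat.mod_eq_of_lt (by omega)]
    omega
  · have h1 : c j ≤ c (Fin.ofNat (c.length + 1) (t - 1)) := by
      refine c.monotone ?_
      rw [Fin.le_def]
      simp only [Fin.val_ofNat]
      rw [Nat.mod_eq_of_lt (by omega)]
      omega
    rw [hj] at h1
    exact h1

end Chains

/-! ### Reduction to the quotient by the unmixed component -/

section Reduction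

variable {R : Type u} [CommRing R] [IsLocalRing R]

theorem comap_mk_maximalIdeal (U : Ideal R) [IsLocalRing (R ⧸ U)] :
    (maximalIdeal (R ⧸ U)).comap (Ideal.Quotient.mk U) = maximalIdeal R :=
  eq_maximalIdeal (Ideal.comap_isMaximal_of_surjective _ Ideal.Quotient.mk_surjective)

theorem isSOPMod_iff (U : Ideal R) [IsLocalRing (R ⧸ U)] {t : ℕ} (x : Fin t → R) :
    IsSOPMod U x ↔ (Ideal.span (Set.range fun i => Ideal.Quotient.mk U (x i))).radical =
      maximalIdeal (R ⧸ U) := by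
  have h1 : Ideal.span (Set.range fun i => Ideal.Quotient.mk U (x i)) =
      (Ideal.span (Set.range x)).map (Ideal.Quotient.mk U) := by
    rw [Ideal.map_span, ← Set.range_comp]
    rfl
  have h2 : (Ideal.span (Set.range x) ⊔ U).radical =
      (Ideal.span (Set.range fun i => Ideal.Quotient.mk U (x i))).radical.comap
        (Ideal.Quotient.mk U) := by
    rw [Ideal.comap_radical, h1, Ideal.comap_map_of_surjective _ Ideal.Quotient.mk_surjective,
      ← RingHom.ker_eq_comap_bot, Ideal.mk_ker]
  rw [IsSOPMod, h2, ← comap_mk_maximalIdeal U]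
  exact (Ideal.comap_injective_of_surjective _ Ideal.Quotient.mk_surjective).eq_iff

theorem span_mk_le_pow (U : Ideal R) [IsLocalRing (R ⧸ U)] {t ℓ : ℕ} {x : Fin t → R}
    (h : Ideal.span (Set.range x) ≤ maximalIdeal R ^ ℓ) :
    Ideal.span (Set.range fun i => Ideal.Quotient.mk U (x i)) ≤ maximalIdeal (R ⧸ U) ^ ℓ := by
  rw [Ideal.span_le]
  rintro _ ⟨i, rfl⟩
  have h1 := Ideal.mem_map_of_mem (Ideal.Quotient.mk U) (h (Ideal.subset_span ⟨i, rfl⟩))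
  rw [Ideal.map_pow] at h1
  refine Ideal.pow_right_mono ?_ ℓ h1
  rw [Ideal.map_le_iff_le_comap, comap_mk_maximalIdeal]

end Reduction

/-- Let `(R, m)` be a catenary Noetherian local ring of dimension `t` with unmixed component
`U = U_R(0)` (the largest ideal of `R` of dimension `< t`).  There is a positive integer `ℓ`,
depending only on `R`, such that whenever `x = x₁, …, x_t` is a sequence of elements with
`(x) ⊆ m^ℓ` whose image is a system of parameters of `R/U`, and `y = y₁, …, y_t` satisfies
`(y) ⊆^A (x)`, then the image of `y` is a system of parameters of `R/U` if and only if the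
determinantal map `det A : R/(x)^lim → R/(y)^lim` is injective (expressed elementwise). -/
theorem exists_bound_sop_mod_unmixed_iff_determinantal_map_injective
    {R : Type*} [CommRing R] [IsNoetherianRing R] [IsLocalRing R]
    {t : ℕ} (hdim : ringKrullDim R = t)
    (hcat : IsCatenaryRing R)
    (U : Ideal R) (hUdim : moduleDim R U < (t : WithBot ℕ∞))
    (hUmax : ∀ J : Ideal R, moduleDim R J < (t : WithBot ℕ∞) → J ≤ U) :
    ∃ ℓ : ℕ, 0 < ℓ ∧
      ∀ (x y : Fin t → R) (A : Matrix (Fin t) (Fin t) R),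
        IsSOPMod U x → Ideal.span (Set.range x) ≤ maximalIdeal R ^ ℓ →
        (∀ i, y i = ∑ j, A i j * x j) →
        (IsSOPMod U y ↔
          ∀ r : R, A.det * r ∈ limitClosure (M := R) y → r ∈ limitClosure (M := R) x) := by
  have hUtop : U ≠ ⊤ := by
    rintro rfl
    have h1 : Module.annihilator R (⊤ : Ideal R) = ⊥ := by
      rw [(Submodule.topEquiv (R := R) (M := R)).annihilator_eq]
      exact Module.annihilator_eq_bot.2 inferInstance
    have h2 : ringKrullDim (R ⧸ (⊥ : Ideal R)) = ringKrullDim R :=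
      ringKrullDim_eq_of_ringEquiv (RingEquiv.quotientBot R)
    rw [moduleDim, h1, h2, hdim] at hUdim
    exact lt_irrefl _ hUdim
  have hnt : Nontrivial (R ⧸ U) := Ideal.Quotient.nontrivial_iff.2 hUtop
  have hloc : IsLocalRing (R ⧸ U) :=
    IsLocalRing.of_surjective' (Ideal.Quotient.mk U) Ideal.Quotient.mk_surjective
  obtain ⟨ℓ, hℓ, h⟩ := exists_bound_of_chains (S := R ⧸ U) (t := t)
    (hdim ▸ ringKrullDim_quotient_le U) (by
      intro P hP hPm
      obtain ⟨p, hp, hUp, hlt, hPp⟩ := exists_chain_of_catenary hdim hcat U hUdim hUmax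
        (P.comap (Ideal.Quotient.mk U)) (Ideal.comap_isPrime _ _)
        (by
          conv_lhs => rw [← Ideal.mk_ker (I := U)]
          exact Ideal.ker_le_comap _)
        (fun h => hPm (Ideal.comap_injective_of_surjective _ Ideal.Quotient.mk_surjective
          (h.trans (comap_mk_maximalIdeal U).symm)))
      have hcomap : ∀ i ≤ t, ((p i).map (Ideal.Quotient.mk U)).comap (Ideal.Quotient.mk U) =
          p i := by
        intro i hi
        rw [Ideal.comap_map_of_surjective _ Ideal.Quotient.mk_surjective,
          ← RingHom.ker_eq_comap_bot, Ideal.mk_ker]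
        exact sup_eq_left.2 (hUp i hi)
      refine ⟨fun i => (p i).map (Ideal.Quotient.mk U), fun i hi => ?_, fun i hi => ?_, ?_⟩
      · have := hp i hi
        exact Ideal.map_isPrime_of_surjective Ideal.Quotient.mk_surjective (by
          rw [Ideal.mk_ker]; exact hUp i hi)
      · refine lt_of_le_of_ne (Ideal.map_mono (hlt i hi).le) fun he => (hlt i hi).ne ?_
        rw [← hcomap i hi.le, ← hcomap (i + 1) hi]
        exact congrArg _ he
      · rw [← Ideal.map_comap_of_surjective _ Ideal.Quotient.mk_surjective P]
        exact Ideal.map_mono hPp)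
  refine ⟨ℓ, hℓ, fun x y A hx hxl hA => ?_⟩
  have key := h (fun i => Ideal.Quotient.mk U (x i)) (fun i => Ideal.Quotient.mk U (y i))
    ((Ideal.Quotient.mk U).mapMatrix A) ((isSOPMod_iff U x).1 hx) (span_mk_le_pow U hxl)
    (fun i => by simp [hA])
  rw [isSOPMod_iff, key, Ideal.Quotient.mk_surjective.forall]
  refine forall_congr' fun r => ?_
  rw [← RingHom.map_det, ← map_mul, mem_limitClosure_iff, mem_limitClosure_iff,
    ← inLim_quotient_iff U hUdim y, ← inLim_quotient_iff U hUdim x]
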